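/- arXiv:1007.1178 — 6 statements merged into one kernel-verified Lean document; each statement's English description precedes it below -/
import Mathlib

section
/- Let H₁ and H₂ be triangular line graphs with H₁ a triangle-induced subgraph of H₂. Then for every preimage G₂ of H₂ with edge-to-vertex bijection f₂ : E(G₂) → V(H₂) realizing T(G₂) ≅ H₂, the subgraph G₁ of G₂ induced by the edge set f₂⁻¹(V(H₁)) is a preimage of H₁: T(G₁) ≅ H₁ via the restriction of f₂ to E(G₁). -/
open SimpleGraph

/-- The triangular line graph `T(G)` of a graph `G`: vertices are the edges of `G`,
with two edges adjacent iff they share an endpoint and lie in a common triangle. -/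
def TriLine {V : Type*} (G : SimpleGraph V) : SimpleGraph G.edgeSet where
  Adj e₁ e₂ := ∃ u v w : V, G.Adj u v ∧ G.Adj v w ∧ G.Adj u w ∧
      (e₁ : Sym2 V) = s(u, v) ∧ (e₂ : Sym2 V) = s(v, w)
  symm := by
    constructor
    rintro e₁ e₂ ⟨u, v, w, huv, hvw, huw, h₁, h₂⟩
    exact ⟨w, v, u, hvw.symm, huv.symm, huw.symm, by rw [h₂]; exact Sym2.eq_swap,
      by rw [h₁]; exact Sym2.eq_swap⟩
  loopless := by
    constructor
    rintro e ⟨u, v, w, huv, hvw, huw, h₁, h₂⟩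
    rw [h₁, Sym2.eq_iff] at h₂
    rcases h₂ with ⟨h, _⟩ | ⟨h, _⟩
    · exact huv.ne h
    · exact huw.ne h

/-- `H` is a triangular line graph: it is isomorphic to `T(G)` for some finite graph `G`. -/
def IsTriLineGraph {W : Type*} (H : SimpleGraph W) : Prop :=
  ∃ (V : Type) (_ : Fintype V) (G : SimpleGraph V), Nonempty (TriLine G ≃g H)

/-- Given a preimage `G` of `H` (via the isomorphism `f : T(G) ≃g H`) and a set `S` of
vertices of `H`, this is the subgraph of `G` consisting of the edges of `G` corresponding
to the vertices in `S` (together with their endpoints); i.e. `T⁻¹(S)`. -/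
def edgePre {V W : Type*} (G : SimpleGraph V) {H : SimpleGraph W}
    (f : TriLine G ≃g H) (S : Set W) : G.Subgraph where
  verts := {v | ∃ (u : V) (e : G.edgeSet), (e : Sym2 V) = s(v, u) ∧ (f e : W) ∈ S}
  Adj a b := G.Adj a b ∧ ∃ e : G.edgeSet, (e : Sym2 V) = s(a, b) ∧ (f e : W) ∈ S
  adj_sub h := h.1
  edge_vert := by
    rintro a b ⟨h, e, he, hS⟩
    exact ⟨b, e, he, hS⟩
  symm := by
    constructor
    rintro a b ⟨h, e, he, hS⟩
    exact ⟨h.symm, e, he.trans Sym2.eq_swap, hS⟩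

/-- `A` occurs as a (not necessarily induced) subgraph of `B`. -/
def HasSubgraphIso {α β : Type*} (A : SimpleGraph α) (B : SimpleGraph β) : Prop :=
  ∃ f : α → β, Function.Injective f ∧ ∀ a b, A.Adj a b → B.Adj (f a) (f b)

/-- Glue a graph along an identification relation `R`: the quotient graph on
the quotient of the vertex set by the equivalence generated by `R`. -/
def Glue {ι : Type*} (G : SimpleGraph ι) (R : ι → ι → Prop) :
    SimpleGraph (Quotient (Relation.EqvGen.setoid R)) :=
  SimpleGraph.fromRel (fun x y => ∃ a b : ι, G.Adj a b ∧ x = Quotient.mk _ a ∧ y = Quotient.mk _ b)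

/-- The `k`-wheel: a `k`-cycle plus a dominating center vertex (`none`). -/
def wheelGraph (k : ℕ) : SimpleGraph (Option (ZMod k)) :=
  SimpleGraph.fromRel (fun a b =>
    (∃ i : ZMod k, a = some i ∧ b = some (i + 1)) ∨ (a = none ∧ b ≠ none))

/-- The squared `k`-cycle: a `k`-cycle plus edges between vertices at distance two. -/
def squaredCycleGraph (k : ℕ) : SimpleGraph (ZMod k) :=
  SimpleGraph.fromRel (fun i j => j = i + 1 ∨ j = i + 2)

/-- The `k`-sun: a `k`-cycle (the `Sum.inl` vertices), with a new vertex (`Sum.inr i`)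
for each cycle edge `{i, i+1}`, adjacent to both its endpoints. -/
def sunGraph (k : ℕ) : SimpleGraph (ZMod k ⊕ ZMod k) :=
  SimpleGraph.fromRel (fun a b => ∃ i : ZMod k,
    (a = Sum.inl i ∧ b = Sum.inl (i + 1)) ∨
    (a = Sum.inr i ∧ b = Sum.inl i) ∨
    (a = Sum.inr i ∧ b = Sum.inl (i + 1)))

/-- `H₁` is a triangle-induced subgraph of `H₂`: it is an induced subgraph, and whenever
an edge of `H₁` lies in a triangle of `H₂`, the third vertex of that triangle is in `H₁`. -/
def IsTriangleInduced {W : Type*} (H₂ : SimpleGraph W) (H₁ : H₂.Subgraph) : Prop :=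
  H₁.IsInduced ∧
    ∀ u v w : W, H₁.Adj u v → H₂.Adj u v → H₂.Adj v w → H₂.Adj u w → w ∈ H₁.verts

/-! The three sides of a triangle of `G` are pairwise adjacent in `T(G)`. So if `S` is a set of
vertices of `T(G)` that contains the common neighbours of any two of its adjacent elements, then
every triangle of `G` with two sides in `S` has its third side in `S`. Passing from `G` to the
graph with edge set `S` therefore destroys no adjacency of `T(G)` between elements of `S`. The sets
`V(H₁)` with `H₁` triangle-induced have this property, and isomorphisms preserve it. -/

section TriangleClosed

variable {W W' : Type*} {H : SimpleGraph W} {H' : SimpleGraph W'}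

/-- A vertex set is triangle-closed if it contains every common neighbour of any two of its
elements that are adjacent: this is the condition on the vertices of a triangle-induced subgraph. -/
def IsTriangleClosed (H : SimpleGraph W) (S : Set W) : Prop :=
  ∀ ⦃u v w : W⦄, u ∈ S → v ∈ S → H.Adj u v → H.Adj v w → H.Adj u w → w ∈ S

theorem IsTriangleInduced.isTriangleClosed {H₁ : H.Subgraph} (h : IsTriangleInduced H H₁) :
    IsTriangleClosed H H₁.verts :=
  fun u v w hu hv huv ↦ h.2 u v w (h.1 hu hv huv) huv

theorem IsTriangleClosed.preimage {S : Set W'} (hS : IsTriangleClosed H' S) (f : H →g H') :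
    IsTriangleClosed H (f ⁻¹' S) :=
  fun _ _ _ hu hv huv hvw huw ↦ hS hu hv (f.map_adj huv) (f.map_adj hvw) (f.map_adj huw)

/-- The graph induced on the vertices of an induced subgraph, as a graph on a subtype, is that
subgraph; the isomorphism is the identity on vertices. -/
def inducedSubgraphIso {H₁ : H.Subgraph} (h : H₁.IsInduced) : H.induce H₁.verts ≃g H₁.coe where
  toEquiv := Equiv.refl _
  map_rel_iff' := h.adj

end TriangleClosed

section EdgeSubset

variable {V : Type*} {G : SimpleGraph V} {S : Set G.edgeSet} {u v : V}

theorem edgeSet_fromEdgeSet_image_val :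
    (fromEdgeSet (Subtype.val '' S)).edgeSet = Subtype.val '' S := by
  rw [edgeSet_fromEdgeSet, sdiff_eq_left, ← Set.subset_compl_iff_disjoint_right]
  exact (Subtype.coe_image_subset _ S).trans G.edgeSet_subset_compl_diagSet

theorem fromEdgeSet_image_val_adj :
    (fromEdgeSet (Subtype.val '' S)).Adj u v ↔ ∃ h : G.Adj u v, ⟨s(u, v), h⟩ ∈ S := by
  rw [← mem_edgeSet, edgeSet_fromEdgeSet_image_val]
  simp

theorem fromEdgeSet_image_val_le : fromEdgeSet (Subtype.val '' S) ≤ G :=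
  fun _ _ h ↦ (fromEdgeSet_image_val_adj.mp h).1

end EdgeSubset

section TriLine

variable {V : Type*} {G G' : SimpleGraph V} {S : Set G.edgeSet} {u v w : V}

theorem triLine_pairwise_adj_of_triangle (huv : G.Adj u v) (hvw : G.Adj v w) (huw : G.Adj u w) :
    (TriLine G).Adj ⟨s(u, v), huv⟩ ⟨s(v, w), hvw⟩ ∧
      (TriLine G).Adj ⟨s(v, w), hvw⟩ ⟨s(u, w), huw⟩ ∧
      (TriLine G).Adj ⟨s(u, v), huv⟩ ⟨s(u, w), huw⟩ :=
  ⟨⟨u, v, w, huv, hvw, huw, rfl, rfl⟩,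
    ⟨v, w, u, hvw, huw.symm, huv.symm, rfl, Sym2.eq_swap⟩,
    ⟨v, u, w, huv.symm, huw, hvw, Sym2.eq_swap, rfl⟩⟩

theorem triLine_adj_inclusion_iff (hle : G' ≤ G)
    (hclosed : ∀ ⦃u v w : V⦄, G'.Adj u v → G'.Adj v w → G.Adj u w → G'.Adj u w)
    {e₁ e₂ : G'.edgeSet} :
    (TriLine G).Adj (Set.inclusion (edgeSet_mono hle) e₁) (Set.inclusion (edgeSet_mono hle) e₂) ↔
      (TriLine G').Adj e₁ e₂ := by
  constructor
  · rintro ⟨u, v, w, -, -, huw, he₁, he₂⟩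
    have huv : G'.Adj u v := by
      rw [← mem_edgeSet, ← he₁]
      exact e₁.2
    have hvw : G'.Adj v w := by
      rw [← mem_edgeSet, ← he₂]
      exact e₂.2
    exact ⟨u, v, w, huv, hvw, hclosed huv hvw huw, he₁, he₂⟩
  · rintro ⟨u, v, w, huv, hvw, huw, he₁, he₂⟩
    exact ⟨u, v, w, hle huv, hle hvw, hle huw, he₁, he₂⟩

theorem IsTriangleClosed.fromEdgeSet_adj (hS : IsTriangleClosed (TriLine G) S)
    (huv : (fromEdgeSet (Subtype.val '' S)).Adj u v)
    (hvw : (fromEdgeSet (Subtype.val '' S)).Adj v w) (huw : G.Adj u w) :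
    (fromEdgeSet (Subtype.val '' S)).Adj u w := by
  obtain ⟨huv, huvS⟩ := fromEdgeSet_image_val_adj.mp huv
  obtain ⟨hvw, hvwS⟩ := fromEdgeSet_image_val_adj.mp hvw
  obtain ⟨adj_uv_vw, adj_vw_uw, adj_uv_uw⟩ := triLine_pairwise_adj_of_triangle huv hvw huw
  exact fromEdgeSet_image_val_adj.mpr ⟨huw, hS huvS hvwS adj_uv_vw adj_vw_uw adj_uv_uw⟩

/-- For a triangle-closed set `S` of edges of `G`, the triangular line graph of the graph with edge
set `S` is the subgraph of `T(G)` induced by `S`; the isomorphism is the identity on edges. -/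
def IsTriangleClosed.triLineIso (hS : IsTriangleClosed (TriLine G) S) :
    TriLine (fromEdgeSet (Subtype.val '' S)) ≃g (TriLine G).induce S where
  toFun e := ⟨Set.inclusion (edgeSet_mono fromEdgeSet_image_val_le) e,
    Subtype.val_injective.mem_set_image.mp (edgeSet_fromEdgeSet_image_val.subset e.2)⟩
  invFun e := ⟨e.1, edgeSet_fromEdgeSet_image_val.superset (Set.mem_image_of_mem _ e.2)⟩
  left_inv _ := rfl
  right_inv _ := rfl
  map_rel_iff' := triLine_adj_inclusion_iff fromEdgeSet_image_val_le fun _ _ _ ↦ hS.fromEdgeSet_adj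

end TriLine

theorem triangleInduced_preimage_general {V W : Type*} {G₂ : SimpleGraph V} {H₂ : SimpleGraph W}
    {H₁ : H₂.Subgraph} (hTI : IsTriangleInduced H₂ H₁) (f₂ : TriLine G₂ ≃g H₂) :
    ∃ iso : TriLine (fromEdgeSet {e | ∃ h : e ∈ G₂.edgeSet, f₂ ⟨e, h⟩ ∈ H₁.verts}) ≃g H₁.coe,
      ∀ (e : Sym2 V) (h₁) (h₂ : e ∈ G₂.edgeSet), (iso ⟨e, h₁⟩ : W) = f₂ ⟨e, h₂⟩ := by
  have image_eq : {e | ∃ h : e ∈ G₂.edgeSet, f₂ ⟨e, h⟩ ∈ H₁.verts} =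
      Subtype.val '' (f₂ ⁻¹' H₁.verts) := by
    ext
    simp
  have hclosed : IsTriangleClosed (TriLine G₂) (f₂ ⁻¹' H₁.verts) :=
    hTI.isTriangleClosed.preimage f₂.toHom
  have hbij : Set.BijOn f₂ (f₂ ⁻¹' H₁.verts) H₁.verts := f₂.toEquiv.bijOn fun _ ↦ Iff.rfl
  rw [image_eq]
  exact ⟨hclosed.triLineIso.trans <| (f₂.induce hbij).trans <| inducedSubgraphIso hTI.1,
    fun _ _ _ ↦ rfl⟩

/-- If `H₁` and `H₂` are triangular line graphs with `H₁` a triangle-induced subgraph of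
`H₂`, then for every preimage `G₂` of `H₂` with edge-to-vertex bijection
`f₂ : T(G₂) ≃g H₂`, the subgraph `G₁` of `G₂` induced by the edge set `f₂⁻¹(V(H₁))` is a
preimage of `H₁` via the restriction of `f₂`. -/
theorem triangleInduced_preimage {W : Type} (H₂ : SimpleGraph W) (H₁ : H₂.Subgraph)
    (hH₂ : IsTriLineGraph H₂) (hH₁ : IsTriLineGraph H₁.coe)
    (hTI : IsTriangleInduced H₂ H₁)
    {V : Type} [Fintype V] (G₂ : SimpleGraph V) (f₂ : TriLine G₂ ≃g H₂) :
    ∀ F : Set (Sym2 V),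
      F = {e : Sym2 V | ∃ h : e ∈ G₂.edgeSet, (f₂ ⟨e, h⟩ : W) ∈ H₁.verts} →
      ∃ iso : TriLine (SimpleGraph.fromEdgeSet F) ≃g H₁.coe,
        ∀ (e : Sym2 V) (h₁ : e ∈ (SimpleGraph.fromEdgeSet F).edgeSet)
          (h₂ : e ∈ G₂.edgeSet), (iso ⟨e, h₁⟩ : W) = f₂ ⟨e, h₂⟩ := by
  rintro _ rfl
  exact triangleInduced_preimage_general hTI f₂
end

section
/- Let G be any finite simple graph and H = T(G) its triangular line graph. Then any triangle-induced subgraph H′ of H is also a triangular line graph, and moreover H′ has a preimage G′ that is a subgraph of G. -/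
open SimpleGraph

/-!
Take `G' = T⁻¹(S)`, the edges of `G` corresponding to the vertex set `S` of `H'`. The edges of `G'`
are in bijection with `S`, and since `H'` is induced only one thing can go wrong: two edges of `G'`
may span a triangle of `G` whose third edge is missing from `G'`. But the three edges of a triangle
of `G` form a triangle of `T(G)`, so the triangle condition on `H'` puts the third edge into `S`.
-/

section TriLine

variable {V : Type*} {G G' : SimpleGraph V}

theorem TriLine.adj_mk {u v w : V} (huv : G.Adj u v) (hvw : G.Adj v w) (huw : G.Adj u w) :
    (TriLine G).Adj ⟨s(u, v), huv⟩ ⟨s(v, w), hvw⟩ :=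
  ⟨u, v, w, huv, hvw, huw, rfl, rfl⟩

theorem TriLine.adj_inclusion (hle : G' ≤ G) {e₁ e₂ : G'.edgeSet} (h : (TriLine G').Adj e₁ e₂) :
    (TriLine G).Adj (Set.inclusion (edgeSet_mono hle) e₁)
      (Set.inclusion (edgeSet_mono hle) e₂) := by
  obtain ⟨u, v, w, huv, hvw, huw, h₁, h₂⟩ := h
  exact ⟨u, v, w, hle huv, hle hvw, hle huw, h₁, h₂⟩

end TriLine

section edgePre

variable {V W : Type*} {G : SimpleGraph V} {H : SimpleGraph W} (f : TriLine G ≃g H)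

theorem edgePre_adj {S : Set W} {a b : V} :
    (edgePre G f S).Adj a b ↔ ∃ h : G.Adj a b, f ⟨s(a, b), h⟩ ∈ S := by
  constructor
  · rintro ⟨h, e, he, hS⟩
    obtain rfl : e = ⟨s(a, b), h⟩ := Subtype.ext he
    exact ⟨h, hS⟩
  · rintro ⟨h, hS⟩
    exact ⟨h, ⟨s(a, b), h⟩, rfl, hS⟩

theorem mem_edgeSet_edgePre {S : Set W} {e : Sym2 V} :
    e ∈ (edgePre G f S).spanningCoe.edgeSet ↔ ∃ h : e ∈ G.edgeSet, f ⟨e, h⟩ ∈ S := by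
  induction e using Sym2.ind with
  | _ a b => exact edgePre_adj f

/-- The bijection between the edges of `T⁻¹(S)` and `S` induced by `f`. Here `T⁻¹(S)` is taken
with all of `V` as vertex set, since isolated vertices do not affect the triangular line graph. -/
def edgePreEquiv (S : Set W) : (edgePre G f S).spanningCoe.edgeSet ≃ S where
  toFun e :=
    have he := (mem_edgeSet_edgePre f).1 e.2
    ⟨f ⟨e, he.1⟩, he.2⟩
  invFun x := ⟨f.symm x, (mem_edgeSet_edgePre f).2 ⟨(f.symm x).2, by simp⟩⟩
  left_inv e := by simp
  right_inv x := by simp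

theorem edgePreEquiv_adj {S : Set W} {e₁ e₂ : (edgePre G f S).spanningCoe.edgeSet}
    (h : (TriLine (edgePre G f S).spanningCoe).Adj e₁ e₂) :
    H.Adj (edgePreEquiv f S e₁) (edgePreEquiv f S e₂) :=
  f.map_adj_iff.2 (TriLine.adj_inclusion (edgePre G f S).spanningCoe_le h)

variable {H' : H.Subgraph}

theorem IsTriangleInduced.third_edge_mem (hH' : IsTriangleInduced H H') {u v w : V}
    (huv : G.Adj u v) (hvw : G.Adj v w) (huw : G.Adj u w)
    (h : H'.Adj (f ⟨s(u, v), huv⟩) (f ⟨s(v, w), hvw⟩)) : f ⟨s(u, w), huw⟩ ∈ H'.verts := by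
  have hvw_uw : (TriLine G).Adj ⟨s(v, w), hvw⟩ ⟨s(u, w), huw⟩ := by
    simpa only [Sym2.eq_swap] using TriLine.adj_mk hvw huw.symm huv.symm
  have huv_uw : (TriLine G).Adj ⟨s(u, v), huv⟩ ⟨s(u, w), huw⟩ := by
    simpa only [Sym2.eq_swap] using TriLine.adj_mk huv.symm huw hvw
  exact hH'.2 _ _ _ h h.adj_sub (f.map_adj_iff.2 hvw_uw) (f.map_adj_iff.2 huv_uw)

theorem IsTriangleInduced.triLine_edgePre_adj (hH' : IsTriangleInduced H H')
    {e₁ e₂ : (edgePre G f H'.verts).spanningCoe.edgeSet}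
    (h : H'.Adj (edgePreEquiv f H'.verts e₁) (edgePreEquiv f H'.verts e₂)) :
    (TriLine (edgePre G f H'.verts).spanningCoe).Adj e₁ e₂ := by
  obtain ⟨u, v, w, huv, hvw, huw, h₁, h₂⟩ := f.map_adj_iff.1 h.adj_sub
  obtain ⟨e₁, he₁⟩ := e₁
  obtain ⟨e₂, he₂⟩ := e₂
  obtain rfl : e₁ = s(u, v) := h₁
  obtain rfl : e₂ = s(v, w) := h₂
  have huw_edgePre : (edgePre G f H'.verts).Adj u w :=
    (edgePre_adj f).2 ⟨huw, hH'.third_edge_mem f huv hvw huw h⟩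
  exact TriLine.adj_mk he₁ he₂ huw_edgePre

/-- For triangle-induced `H'` with vertex set `S`, the bijection `edgePreEquiv` exhibits `T⁻¹(S)`
as a preimage of `H'`. -/
def IsTriangleInduced.edgePreIso (hH' : IsTriangleInduced H H') :
    TriLine (edgePre G f H'.verts).spanningCoe ≃g H'.coe where
  toEquiv := edgePreEquiv f H'.verts
  map_rel_iff' :=
    ⟨hH'.triLine_edgePre_adj f, fun h ↦ hH'.1.adj.2 (edgePreEquiv_adj f h)⟩

end edgePre

theorem triangleInduced_isTriLineGraph_general {V W : Type*} (G : SimpleGraph V)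
    {H : SimpleGraph W} (f : TriLine G ≃g H) (H' : H.Subgraph) (h : IsTriangleInduced H H') :
    ∃ G' : SimpleGraph V, G' ≤ G ∧ Nonempty (TriLine G' ≃g H'.coe) :=
  ⟨_, (edgePre G f H'.verts).spanningCoe_le, ⟨h.edgePreIso f⟩⟩

/-- Any triangle-induced subgraph `H'` of a triangular line graph `H = T(G)` is itself a
triangular line graph, with a preimage `G'` that is a subgraph of `G`. -/
theorem triangleInduced_isTriLineGraph {V : Type} [Fintype V] (G : SimpleGraph V)
    (H' : (TriLine G).Subgraph) (h : IsTriangleInduced (TriLine G) H') :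
    IsTriLineGraph H'.coe ∧
      ∃ G' : SimpleGraph V, G' ≤ G ∧ Nonempty (TriLine G' ≃g H'.coe) := by
  obtain ⟨G', hle, hiso⟩ := triangleInduced_isTriLineGraph_general G Iso.refl H' h
  exact ⟨⟨V, inferInstance, G', hiso⟩, G', hle, hiso⟩
end

section
/- For every integer k ≥ 7, the triangular line graph of the k-wheel W_k is isomorphic to the k-sun S_k. -/
open SimpleGraph

/-!
When `k ≥ 4` the rim of the wheel contains no triangle, so the triangles of `W_k` are exactly those
formed by two consecutive spokes `i`, `i + 1` and the rim edge joining their ends. In `T(W_k)` the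
spokes therefore form a `k`-cycle, and each rim edge is adjacent precisely to the two spokes that
meet it: the spokes are the cycle vertices of the sun and the rim edges are its tips.
-/

theorem triLine_adj_mk_iff {V : Type*} {G : SimpleGraph V} {a b : V} (hab : G.Adj a b)
    (e : G.edgeSet) :
    (TriLine G).Adj ⟨s(a, b), hab⟩ e ↔
      ∃ c, G.Adj a c ∧ G.Adj b c ∧ ((e : Sym2 V) = s(a, c) ∨ (e : Sym2 V) = s(b, c)) := by
  constructor
  · rintro ⟨u, v, w, -, hvw, huw, hab_eq, he⟩
    rcases Sym2.eq_iff.1 hab_eq with ⟨rfl, rfl⟩ | ⟨rfl, rfl⟩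
    · exact ⟨w, huw, hvw, .inr he⟩
    · exact ⟨w, hvw, huw, .inl he⟩
  · rintro ⟨c, hac, hbc, he | he⟩
    · exact ⟨b, a, c, hab.symm, hac, hbc, Sym2.eq_swap, he⟩
    · exact ⟨a, b, c, hab, hbc, hac, rfl, he⟩

theorem triLine_adj_of_common_vertex {V : Type*} {G : SimpleGraph V} {v a b : V}
    (ha : G.Adj v a) (hb : G.Adj v b) :
    (TriLine G).Adj ⟨s(v, a), ha⟩ ⟨s(v, b), hb⟩ ↔ G.Adj a b := by
  rw [triLine_adj_mk_iff]
  constructor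
  · rintro ⟨c, hvc, hac, h | h⟩
    · rwa [Sym2.congr_right.1 h]
    · rcases Sym2.eq_iff.1 h with ⟨rfl, -⟩ | ⟨rfl, -⟩
      · exact absurd rfl ha.ne
      · exact absurd rfl hvc.ne
  · exact fun hab ↦ ⟨b, hb, hab, .inl rfl⟩

section WheelAndSun

variable {k : ℕ}

theorem wheelGraph_adj_none_some (i : ZMod k) : (wheelGraph k).Adj none (some i) := by
  simp [wheelGraph]

theorem wheelGraph_adj_some_some {i j : ZMod k} :
    (wheelGraph k).Adj (some i) (some j) ↔ i ≠ j ∧ (j = i + 1 ∨ i = j + 1) := by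
  simp [wheelGraph]

theorem wheelGraph_adj_some_add_one [Nontrivial (ZMod k)] (i : ZMod k) :
    (wheelGraph k).Adj (some i) (some (i + 1)) :=
  wheelGraph_adj_some_some.2 ⟨by simp, .inl rfl⟩

theorem wheelGraph_rim_triangle_free (h3 : (3 : ZMod k) ≠ 0) {i j l : ZMod k}
    (hij : (wheelGraph k).Adj (some i) (some j)) (hil : (wheelGraph k).Adj (some i) (some l)) :
    ¬ (wheelGraph k).Adj (some j) (some l) := by
  rw [wheelGraph_adj_some_some] at hij hil ⊢
  -- The three steps `±1` around a triangle add up to `±1` or `±3`, and `1 ≠ 0` because `i ≠ j`.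
  grind

theorem sunGraph_adj_inl_inl {i j : ZMod k} :
    (sunGraph k).Adj (.inl i) (.inl j) ↔ i ≠ j ∧ (j = i + 1 ∨ i = j + 1) := by
  simp [sunGraph]

theorem sunGraph_adj_inl_inr {i j : ZMod k} :
    (sunGraph k).Adj (.inl i) (.inr j) ↔ i = j ∨ i = j + 1 := by
  simp only [sunGraph, fromRel_adj]
  grind

theorem sunGraph_not_adj_inr_inr (i j : ZMod k) : ¬ (sunGraph k).Adj (.inr i) (.inr j) := by
  simp [sunGraph]

/-- The spoke of the wheel joining the center to the rim vertex `i`. -/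
def wheelSpoke (i : ZMod k) : (wheelGraph k).edgeSet :=
  ⟨s(none, some i), wheelGraph_adj_none_some i⟩

theorem wheelSpoke_injective : Function.Injective (wheelSpoke (k := k)) :=
  fun _ _ h ↦ Option.some.inj (Sym2.congr_right.1 (congrArg Subtype.val h))

theorem triLine_adj_wheelSpoke_wheelSpoke {i j : ZMod k} :
    (TriLine (wheelGraph k)).Adj (wheelSpoke i) (wheelSpoke j) ↔
      i ≠ j ∧ (j = i + 1 ∨ i = j + 1) :=
  (triLine_adj_of_common_vertex _ _).trans wheelGraph_adj_some_some

variable [Nontrivial (ZMod k)]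

/-- The rim edge of the wheel joining the rim vertices `i` and `i + 1`. -/
def wheelRim (i : ZMod k) : (wheelGraph k).edgeSet :=
  ⟨s(some i, some (i + 1)), wheelGraph_adj_some_add_one i⟩

theorem wheelRim_injective (h2 : (2 : ZMod k) ≠ 0) : Function.Injective (wheelRim (k := k)) := by
  intro i j h
  rcases Sym2.eq_iff.1 (congrArg Subtype.val h) with ⟨hij, -⟩ | ⟨hij, hji⟩
  · exact Option.some.inj hij
  · have hi : i = j + 1 := Option.some.inj hij
    have hj : i + 1 = j := Option.some.inj hji
    exact absurd (by linear_combination hj - hi) h2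

theorem wheelSpoke_ne_wheelRim (i j : ZMod k) : wheelSpoke i ≠ wheelRim j := by
  simp [wheelSpoke, wheelRim, Subtype.ext_iff]

theorem eq_wheelSpoke_or_eq_wheelRim (e : (wheelGraph k).edgeSet) :
    (∃ i, e = wheelSpoke i) ∨ ∃ i, e = wheelRim i := by
  obtain ⟨e, he⟩ := e
  induction e with | _ a b
  have hab : (wheelGraph k).Adj a b := he
  rcases a with _ | i <;> rcases b with _ | j
  · exact absurd rfl hab.ne
  · exact .inl ⟨j, rfl⟩
  · exact .inl ⟨i, Subtype.ext Sym2.eq_swap⟩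
  · rcases (wheelGraph_adj_some_some.1 hab).2 with rfl | rfl
    · exact .inr ⟨i, rfl⟩
    · exact .inr ⟨j, Subtype.ext Sym2.eq_swap⟩

theorem triLine_adj_wheelSpoke_wheelRim {i j : ZMod k} :
    (TriLine (wheelGraph k)).Adj (wheelSpoke i) (wheelRim j) ↔ i = j ∨ i = j + 1 := by
  rw [wheelSpoke, triLine_adj_mk_iff]
  constructor
  · rintro ⟨c, -, -, h | h⟩
    · simp [wheelRim] at h
    · have hi : some i ∈ (wheelRim j : Sym2 (Option (ZMod k))) := h ▸ Sym2.mem_mk_left _ _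
      simpa [wheelRim] using hi
  · rintro (rfl | rfl)
    · exact ⟨some (i + 1), wheelGraph_adj_none_some _, wheelGraph_adj_some_add_one i, .inr rfl⟩
    · exact ⟨some j, wheelGraph_adj_none_some _, (wheelGraph_adj_some_add_one j).symm,
        .inr Sym2.eq_swap⟩

theorem triLine_not_adj_wheelRim_wheelRim (h3 : (3 : ZMod k) ≠ 0) (i j : ZMod k) :
    ¬ (TriLine (wheelGraph k)).Adj (wheelRim i) (wheelRim j) := by
  rw [wheelRim, triLine_adj_mk_iff]
  rintro ⟨_ | l, hil, hil', h⟩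
  · simp [wheelRim] at h
  · exact wheelGraph_rim_triangle_free h3 (wheelGraph_adj_some_add_one i) hil hil'

/-- The correspondence between the vertices of the sun and the edges of the wheel: cycle vertices
go to spokes, and the tip over `{i, i + 1}` goes to the rim edge `{i, i + 1}`. -/
def sunVertexToWheelEdge : ZMod k ⊕ ZMod k → (wheelGraph k).edgeSet :=
  Sum.elim wheelSpoke wheelRim

theorem sunVertexToWheelEdge_bijective (h2 : (2 : ZMod k) ≠ 0) :
    Function.Bijective (sunVertexToWheelEdge (k := k)) := by
  refine ⟨wheelSpoke_injective.sumElim (wheelRim_injective h2) wheelSpoke_ne_wheelRim, fun e ↦ ?_⟩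
  rcases eq_wheelSpoke_or_eq_wheelRim e with ⟨i, rfl⟩ | ⟨i, rfl⟩
  · exact ⟨.inl i, rfl⟩
  · exact ⟨.inr i, rfl⟩

theorem triLine_adj_sunVertexToWheelEdge (h3 : (3 : ZMod k) ≠ 0) (x y : ZMod k ⊕ ZMod k) :
    (TriLine (wheelGraph k)).Adj (sunVertexToWheelEdge x) (sunVertexToWheelEdge y) ↔
      (sunGraph k).Adj x y := by
  rcases x with i | i <;> rcases y with j | j
  · exact triLine_adj_wheelSpoke_wheelSpoke.trans sunGraph_adj_inl_inl.symm
  · exact triLine_adj_wheelSpoke_wheelRim.trans sunGraph_adj_inl_inr.symm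
  · rw [SimpleGraph.adj_comm, (sunGraph k).adj_comm]
    exact triLine_adj_wheelSpoke_wheelRim.trans sunGraph_adj_inl_inr.symm
  · exact iff_of_false (triLine_not_adj_wheelRim_wheelRim h3 i j) (sunGraph_not_adj_inr_inr i j)

end WheelAndSun

theorem zmod_natCast_ne_zero_of_pos_of_lt {k n : ℕ} (hn : 0 < n) (hnk : n < k) :
    (n : ZMod k) ≠ 0 := by
  rw [Ne, ZMod.natCast_eq_zero_iff]
  exact Nat.not_dvd_of_pos_of_lt hn hnk

theorem triLine_wheel_iso_sun_general (k : ℕ) (hk : 4 ≤ k) :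
    Nonempty (TriLine (wheelGraph k) ≃g sunGraph k) := by
  have : Fact (1 < k) := ⟨by lia⟩
  have h2 : (2 : ZMod k) ≠ 0 := zmod_natCast_ne_zero_of_pos_of_lt two_pos (by lia)
  have h3 : (3 : ZMod k) ≠ 0 := zmod_natCast_ne_zero_of_pos_of_lt three_pos (by lia)
  let sunIso : sunGraph k ≃g TriLine (wheelGraph k) :=
    { toEquiv := Equiv.ofBijective _ (sunVertexToWheelEdge_bijective h2)
      map_rel_iff' := triLine_adj_sunVertexToWheelEdge h3 _ _ }
  exact ⟨sunIso.symm⟩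

/-- For every `k ≥ 7`, the triangular line graph of the `k`-wheel is isomorphic to the `k`-sun. -/
theorem triLine_wheel_iso_sun (k : ℕ) (hk : 7 ≤ k) :
    Nonempty (TriLine (wheelGraph k) ≃g sunGraph k) :=
  triLine_wheel_iso_sun_general k (by lia)
end

section
/- For every integer k ≥ 7, the triangular line graph of the squared k-cycle C_k² is isomorphic to the k-sun S_k. -/
open SimpleGraph

/-! The triangles of `C_k²` are exactly the triples `{i, i + 1, i + 2}`: orient every edge of `C_k²`
forwards, by a step of `1` or `2`. A cyclically oriented triangle would advance by `3`, `4`, `5` or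
`6` in total, which is nonzero modulo `k ≥ 7`, and in a transitively oriented one the long step can
only be `2 = 1 + 1`. Under the bijection `inl i ↦ {i, i + 1}`, `inr i ↦ {i, i + 2}` the edges of
`{i, i + 1, i + 2}` are the vertices of the triangle `{inl i, inl (i + 1), inr i}` of the sun, and
in both graphs adjacency means being two distinct members of one of these triples. -/

theorem exists_mem_and_mem_of_mem_sym2 {V : Type*} {s : Finset V} {e₁ e₂ : Sym2 V}
    (hs : s.card < 4) (hd₁ : ¬e₁.IsDiag) (hd₂ : ¬e₂.IsDiag) (h₁ : e₁ ∈ s.sym2) (h₂ : e₂ ∈ s.sym2) :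
    ∃ v, v ∈ e₁ ∧ v ∈ e₂ := by
  classical
  have hsub {e : Sym2 V} (he : e ∈ s.sym2) : e.toFinset ⊆ s := fun x hx =>
    Finset.mem_sym2_iff.1 he x (Sym2.mem_toFinset.1 hx)
  have hcard : s.card < e₁.toFinset.card + e₂.toFinset.card := by
    rwa [Sym2.card_toFinset_of_not_isDiag _ hd₁, Sym2.card_toFinset_of_not_isDiag _ hd₂]
  obtain ⟨v, hv⟩ := Finset.inter_nonempty_of_card_lt_card_add_card (hsub h₁) (hsub h₂) hcard
  exact ⟨v, by simpa only [Finset.mem_inter, Sym2.mem_toFinset] using hv⟩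

theorem triLine_adj_iff {V : Type*} {G : SimpleGraph V} {e₁ e₂ : G.edgeSet} :
    (TriLine G).Adj e₁ e₂ ↔
      e₁ ≠ e₂ ∧ ∃ s, G.IsNClique 3 s ∧ (e₁ : Sym2 V) ∈ s.sym2 ∧ (e₂ : Sym2 V) ∈ s.sym2 := by
  classical
  constructor
  · intro hadj
    refine ⟨hadj.ne, ?_⟩
    obtain ⟨u, v, w, huv, hvw, huw, h₁, h₂⟩ := hadj
    exact ⟨{u, v, w}, is3Clique_triple_iff.2 ⟨huv, huw, hvw⟩, by simp [h₁], by simp [h₂]⟩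
  · rintro ⟨hne, s, hs, h₁, h₂⟩
    obtain ⟨v, ⟨u, hu⟩, w, hw⟩ := exists_mem_and_mem_of_mem_sym2 (by rw [hs.card_eq]; norm_num)
      (G.not_isDiag_of_mem_edgeSet e₁.2) (G.not_isDiag_of_mem_edgeSet e₂.2) h₁ h₂
    have huw : u ≠ w := by
      rintro rfl
      exact hne (Subtype.ext (hu.trans hw.symm))
    rw [hu, Finset.mk_mem_sym2_iff] at h₁
    rw [hw, Finset.mk_mem_sym2_iff] at h₂
    have hvu : G.Adj v u := by simpa only [hu, mem_edgeSet] using e₁.2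
    have hvw : G.Adj v w := by simpa only [hw, mem_edgeSet] using e₂.2
    exact ⟨u, v, w, hvu.symm, hvw, hs.isClique h₁.2 h₂.2 huw, hu.trans Sym2.eq_swap, hw⟩

/-- The triangle of the sun spanned by the added vertex `inr i`. These triangles cover all edges of
the sun. -/
def sunTriangle {k : ℕ} (i : ZMod k) : Set (ZMod k ⊕ ZMod k) :=
  {.inl i, .inl (i + 1), .inr i}

theorem sunGraph_adj_iff {k : ℕ} {x y : ZMod k ⊕ ZMod k} :
    (sunGraph k).Adj x y ↔ x ≠ y ∧ ∃ i, x ∈ sunTriangle i ∧ y ∈ sunTriangle i := by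
  simp only [sunGraph, sunTriangle, fromRel_adj, Set.mem_insert_iff, Set.mem_singleton_iff]
  grind

theorem zmod_ofNat_ne_zero {k n : ℕ} [n.AtLeastTwo] (hnk : n < k) :
    (ofNat(n) : ZMod k) ≠ 0 := by
  rw [← Nat.cast_ofNat, Ne, ZMod.natCast_eq_zero_iff]
  exact Nat.not_dvd_of_pos_of_lt (NeZero.pos n) hnk

/-- The forward orientation of the edges of `C_k²`: a step from `i` advances by `1` or `2`. -/
def IsForwardStep {k : ℕ} (i j : ZMod k) : Prop :=
  j = i + 1 ∨ j = i + 2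

theorem squaredCycleGraph_adj_iff {k : ℕ} (hk : 3 ≤ k) {i j : ZMod k} :
    (squaredCycleGraph k).Adj i j ↔ IsForwardStep i j ∨ IsForwardStep j i := by
  have h2 : (2 : ZMod k) ≠ 0 := zmod_ofNat_ne_zero (by lia)
  simp only [squaredCycleGraph, fromRel_adj, IsForwardStep]
  grind

theorem IsForwardStep.not_cyclic {k : ℕ} (hk : 7 ≤ k) {a b c : ZMod k}
    (hab : IsForwardStep a b) (hbc : IsForwardStep b c) : ¬IsForwardStep c a := by
  have h3 : (3 : ZMod k) ≠ 0 := zmod_ofNat_ne_zero (by lia)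
  have h4 : (4 : ZMod k) ≠ 0 := zmod_ofNat_ne_zero (by lia)
  have h5 : (5 : ZMod k) ≠ 0 := zmod_ofNat_ne_zero (by lia)
  have h6 : (6 : ZMod k) ≠ 0 := zmod_ofNat_ne_zero (by lia)
  grind [IsForwardStep]

theorem IsForwardStep.eq_add_one_and_eq_add_two {k : ℕ} (hk : 4 ≤ k) {a b c : ZMod k}
    (hab : IsForwardStep a b) (hbc : IsForwardStep b c) (hac : IsForwardStep a c) :
    b = a + 1 ∧ c = a + 2 := by
  have h2 : (2 : ZMod k) ≠ 0 := zmod_ofNat_ne_zero (by lia)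
  have h3 : (3 : ZMod k) ≠ 0 := zmod_ofNat_ne_zero (by lia)
  grind [IsForwardStep]

theorem squaredCycleGraph_isNClique_three_iff {k : ℕ} (hk : 7 ≤ k) {s : Finset (ZMod k)} :
    (squaredCycleGraph k).IsNClique 3 s ↔ ∃ i, {i, i + 1, i + 2} = s := by
  have hadj {i j : ZMod k} := squaredCycleGraph_adj_iff (i := i) (j := j) (by lia : 3 ≤ k)
  constructor
  · intro hs
    have transitive {a b c : ZMod k} (hab : IsForwardStep a b) (hbc : IsForwardStep b c)
        (hac : IsForwardStep a c) (habc : s = {a, b, c}) : ∃ i, {i, i + 1, i + 2} = s := by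
      obtain ⟨rfl, rfl⟩ := hab.eq_add_one_and_eq_add_two (by lia) hbc hac
      exact ⟨a, habc.symm⟩
    obtain ⟨a, b, c, hab, hac, hbc, habc⟩ := is3Clique_iff.1 hs
    rw [hadj] at hab hac hbc
    rcases hab with hab | hba <;> rcases hbc with hbc | hcb <;> rcases hac with hac | hca
    · exact transitive hab hbc hac habc
    · exact absurd hca (hab.not_cyclic hk hbc)
    · exact transitive hac hcb hab (by grind)
    · exact transitive hca hab hcb (by grind)
    · exact transitive hba hac hbc (by grind)
    · exact transitive hbc hca hba (by grind)
    · exact absurd hac (hcb.not_cyclic hk hba)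
    · exact transitive hcb hba hca (by grind)
  · rintro ⟨i, rfl⟩
    rw [is3Clique_triple_iff, hadj, hadj, hadj]
    exact ⟨.inl (.inl rfl), .inl (.inr rfl), .inl (.inl (by ring))⟩

/-- The edge of `C_k²` that a vertex of the sun stands for: cycle vertices give the edges of the
`k`-cycle, the added vertices give the chords. It takes values in all of `Sym2 (ZMod k)`, so that no
bound on `k` is needed to define it. -/
def sunEdge {k : ℕ} : ZMod k ⊕ ZMod k → Sym2 (ZMod k)
  | .inl i => s(i, i + 1)
  | .inr i => s(i, i + 2)

theorem range_sunEdge {k : ℕ} (hk : 3 ≤ k) :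
    Set.range (sunEdge (k := k)) = (squaredCycleGraph k).edgeSet := by
  ext e
  induction e with | _ a b
  rw [mem_edgeSet, squaredCycleGraph_adj_iff hk]
  simp only [Set.mem_range, Sum.exists, sunEdge, Sym2.eq_iff, IsForwardStep]
  grind

theorem sunEdge_injective {k : ℕ} (hk : 5 ≤ k) :
    Function.Injective (sunEdge (k := k)) := by
  have h3 : (3 : ZMod k) ≠ 0 := zmod_ofNat_ne_zero (by lia)
  have h4 : (4 : ZMod k) ≠ 0 := zmod_ofNat_ne_zero (by lia)
  rintro (i | i) (j | j) h <;> simp only [sunEdge, Sym2.eq_iff] at h <;> grind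

theorem sunEdge_mem_sym2_iff {k : ℕ} (hk : 5 ≤ k) {x : ZMod k ⊕ ZMod k} {i : ZMod k} :
    sunEdge x ∈ ({i, i + 1, i + 2} : Finset (ZMod k)).sym2 ↔ x ∈ sunTriangle i := by
  have h3 : (3 : ZMod k) ≠ 0 := zmod_ofNat_ne_zero (by lia)
  have h4 : (4 : ZMod k) ≠ 0 := zmod_ofNat_ne_zero (by lia)
  rcases x with j | j <;>
    simp only [sunEdge, sunTriangle, Finset.mk_mem_sym2_iff, Finset.mem_insert,
      Finset.mem_singleton, Set.mem_insert_iff, Set.mem_singleton_iff] <;>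
    grind

/-- For every `k ≥ 7`, the triangular line graph of the squared `k`-cycle is isomorphic
to the `k`-sun. -/
theorem triLine_squaredCycle_iso_sun (k : ℕ) (hk : 7 ≤ k) :
    Nonempty (TriLine (squaredCycleGraph k) ≃g sunGraph k) := by
  have hinj : Function.Injective (sunEdge (k := k)) := sunEdge_injective (by lia)
  let edgeEquiv : ZMod k ⊕ ZMod k ≃ (squaredCycleGraph k).edgeSet :=
    (Equiv.ofInjective sunEdge hinj).trans (Equiv.setCongr (range_sunEdge (by lia)))
  have hcoe (x) : (edgeEquiv x : Sym2 (ZMod k)) = sunEdge x := rfl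
  suffices hadj : ∀ x y, (TriLine (squaredCycleGraph k)).Adj (edgeEquiv x) (edgeEquiv y) ↔
      (sunGraph k).Adj x y from
    ⟨Iso.symm ⟨edgeEquiv, hadj _ _⟩⟩
  intro x y
  simp only [triLine_adj_iff, sunGraph_adj_iff, edgeEquiv.injective.ne_iff, hcoe,
    squaredCycleGraph_isNClique_three_iff hk, exists_exists_eq_and,
    sunEdge_mem_sym2_iff (by lia : 5 ≤ k)]
end

section
/- For every integer k ≥ 3, the triangular line graph of the k-fan is isomorphic to the triangular line graph of the k-triangle strip; this common triangular line graph is a sequence of k − 1 bowties in which consecutive bowties intersect at a triangle and are otherwise disjoint. -/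
open SimpleGraph

/-- The `k`-fan: `k` triangles sharing the common vertex `none`, with consecutive
triangles sharing an edge and otherwise disjoint. -/
def fanGraph (k : ℕ) : SimpleGraph (Option (Fin (k + 1))) :=
  SimpleGraph.fromRel (fun a b =>
    (a = none ∧ b ≠ none) ∨ ∃ i : Fin k, a = some i.castSucc ∧ b = some i.succ)

/-- The `k`-triangle strip: the square of a path, a chain of `k` triangles where
triangles at distance two share a vertex and farther triangles are disjoint. -/
def stripGraph (k : ℕ) : SimpleGraph (Fin (k + 2)) :=
  SimpleGraph.fromRel (fun a b => (b : ℕ) = (a : ℕ) + 1 ∨ (b : ℕ) = (a : ℕ) + 2)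

/-- A chain of `k` triangles in which consecutive triangles share a single vertex:
equivalently, a sequence of `k - 1` bowties in which consecutive bowties intersect at a
triangle and are otherwise disjoint. -/
def triangleChain (k : ℕ) : SimpleGraph (Fin (k + 1) ⊕ Fin k) :=
  SimpleGraph.fromRel (fun a b => ∃ i : Fin k,
    (a = Sum.inl i.castSucc ∧ b = Sum.inl i.succ) ∨
    (a = Sum.inr i ∧ b = Sum.inl i.castSucc) ∨
    (a = Sum.inr i ∧ b = Sum.inl i.succ))

/-!
The graph `T(G)` depends only on the incidence between edges and triangles of `G`: two edges are
adjacent iff they are distinct and lie in a common triangle. The fan and the strip both consist of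
triangles `T₀, …, Tₖ₋₁`. Their edges are the `k + 1` *rungs* `rᵢ`, where `rᵢ₊₁` is shared by `Tᵢ`
and `Tᵢ₊₁`, and the `k` *outer edges* `oᵢ`, each in `Tᵢ` alone; so the edges of `Tᵢ` are `rᵢ`,
`rᵢ₊₁` and `oᵢ` in both graphs. With `rᵢ` as `Sum.inl i` and `oᵢ` as `Sum.inr i`, this is the
incidence between vertices and triangles of the triangle chain.
-/

section Triangles

variable {V : Type*} {G : SimpleGraph V}

theorem exists_mem_and_mem_of_mem_sym2_of_card_le_three {s : Finset V} {e f : Sym2 V}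
    (hs : s.card ≤ 3) (he : ¬e.IsDiag) (hf : ¬f.IsDiag) (hes : e ∈ s.sym2) (hfs : f ∈ s.sym2) :
    ∃ v, v ∈ e ∧ v ∈ f := by
  classical
  by_contra! hdisj
  obtain ⟨a, b⟩ := e
  obtain ⟨c, d⟩ := f
  have hab : a ≠ b := he
  have hcd : c ≠ d := hf
  have hsub : ({a, b, c, d} : Finset V) ⊆ s := by
    simp_all [Finset.insert_subset_iff]
  have hcard : ({a, b, c, d} : Finset V).card = 4 := by
    simp_all
  exact absurd (Finset.card_le_card hsub) (by omega)

theorem triLine_adj_iff_exists_isNClique {e f : G.edgeSet} :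
    (TriLine G).Adj e f ↔
      e ≠ f ∧ ∃ s : Finset V, G.IsNClique 3 s ∧ (e : Sym2 V) ∈ s.sym2 ∧ (f : Sym2 V) ∈ s.sym2 := by
  classical
  constructor
  · intro hef
    refine ⟨hef.ne, ?_⟩
    obtain ⟨u, v, w, huv, hvw, huw, he, hf⟩ := hef
    exact ⟨{u, v, w}, is3Clique_triple_iff.mpr ⟨huv, huw, hvw⟩, by simp [he], by simp [hf]⟩
  · rintro ⟨hne, s, hs, hes, hfs⟩
    obtain ⟨v, ⟨u, hu⟩, w, hw⟩ :=
      exists_mem_and_mem_of_mem_sym2_of_card_le_three hs.card_eq.le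
        (G.not_isDiag_of_mem_edgeSet e.2) (G.not_isDiag_of_mem_edgeSet f.2) hes hfs
    have hvu : G.Adj v u := by simpa only [hu, mem_edgeSet] using e.2
    have hvw : G.Adj v w := by simpa only [hw, mem_edgeSet] using f.2
    rw [hu, Finset.mk_mem_sym2_iff] at hes
    rw [hw, Finset.mk_mem_sym2_iff] at hfs
    have huw : u ≠ w := by
      rintro rfl
      exact hne (Subtype.ext (hu.trans hw.symm))
    exact ⟨u, v, w, hvu.symm, hvw, hs.isClique hes.2 hfs.2 huw, hu.trans Sym2.eq_swap, hw⟩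

/-- An enumeration `φ` of the edges of `G` and an exhaustive family `T` of triangles of `G` identify
`T(G)` with any graph in which adjacency means lying in a common triangle of the family. -/
noncomputable def triLineIsoOfTriangles {W ι : Type*} {H : SimpleGraph W} (φ : W → Sym2 V)
    (hφ : Function.Injective φ) (hrange : Set.range φ = G.edgeSet) (T : ι → Finset V)
    (hT : ∀ s, G.IsNClique 3 s ↔ ∃ i, T i = s)
    (hH : ∀ x y, H.Adj x y ↔ x ≠ y ∧ ∃ i, φ x ∈ (T i).sym2 ∧ φ y ∈ (T i).sym2) :
    TriLine G ≃g H :=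
  RelIso.symm
    { toEquiv := (Equiv.ofInjective φ hφ).trans (Equiv.setCongr hrange)
      map_rel_iff' := by
        intro x y
        rw [triLine_adj_iff_exists_isNClique, hH, (Equiv.injective _).ne_iff]
        simp only [hT, exists_exists_eq_and]
        rfl }

theorem is3Clique_iff_exists_lt [LinearOrder V] {s : Finset V} :
    G.IsNClique 3 s ↔
      ∃ a b c, a < b ∧ b < c ∧ G.Adj a b ∧ G.Adj a c ∧ G.Adj b c ∧ s = {a, b, c} := by
  constructor
  · intro hs
    let f := s.orderEmbOfFin hs.card_eq
    have hlt {i j : Fin 3} (hij : i < j) : f i < f j := f.strictMono hij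
    have hadj {i j : Fin 3} (hij : i < j) : G.Adj (f i) (f j) :=
      hs.isClique (s.orderEmbOfFin_mem _ i) (s.orderEmbOfFin_mem _ j) (hlt hij).ne
    refine ⟨f 0, f 1, f 2, hlt (by decide), hlt (by decide), hadj (by decide), hadj (by decide),
      hadj (by decide), ?_⟩
    calc s = Finset.univ.image f := (s.image_orderEmbOfFin_univ hs.card_eq).symm
      _ = {f 0, f 1, f 2} := by simp [Fin.univ_succ]
  · rintro ⟨a, b, c, -, -, hab, hac, hbc, rfl⟩
    exact is3Clique_triple_iff.mpr ⟨hab, hac, hbc⟩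

end Triangles

section Chain

variable {k : ℕ}

/-- The vertices of the `i`-th triangle of the triangle chain, apex `Sum.inr i` last. -/
def chainTriangle (i : Fin k) : Finset (Fin (k + 1) ⊕ Fin k) :=
  {Sum.inl i.castSucc, Sum.inl i.succ, Sum.inr i}

theorem triangleChain_adj_iff {x y : Fin (k + 1) ⊕ Fin k} :
    (triangleChain k).Adj x y ↔ x ≠ y ∧ ∃ i, x ∈ chainTriangle i ∧ y ∈ chainTriangle i := by
  simp only [triangleChain, fromRel_adj, chainTriangle, Finset.mem_insert, Finset.mem_singleton,
    ← exists_or]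
  refine and_congr_right fun hxy => exists_congr fun i => ?_
  grind

/-- `T(G)` is the triangle chain as soon as `φ` and `T` enumerate the edges and triangles of `G`
with the incidences of the chain: `φ (Sum.inl i)` are the rungs, `φ (Sum.inr i)` the outer edges. -/
noncomputable def triLineIsoTriangleChain {V : Type*} {G : SimpleGraph V}
    (φ : Fin (k + 1) ⊕ Fin k → Sym2 V) (hφ : Function.Injective φ)
    (hrange : Set.range φ = G.edgeSet) (T : Fin k → Finset V)
    (hT : ∀ s, G.IsNClique 3 s ↔ ∃ i, T i = s)
    (hφT : ∀ x i, φ x ∈ (T i).sym2 ↔ x ∈ chainTriangle i) :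
    TriLine G ≃g triangleChain k :=
  triLineIsoOfTriangles φ hφ hrange T hT fun x y => by
    simp only [triangleChain_adj_iff, hφT]

end Chain

section Fan

variable {k : ℕ}

@[simp]
theorem fanGraph_adj_none_some (i : Fin (k + 1)) : (fanGraph k).Adj none (some i) := by
  simp [fanGraph]

theorem fanGraph_adj_some_some {i j : Fin (k + 1)} :
    (fanGraph k).Adj (some i) (some j) ↔ ∃ m : Fin k, s(m.castSucc, m.succ) = s(i, j) := by
  simp only [fanGraph, fromRel_adj, Sym2.eq_iff, exists_or]
  grind

/-- The edges of the `k`-fan: the rungs are its spokes, the outer edges form its rim. -/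
def fanEdge : Fin (k + 1) ⊕ Fin k → Sym2 (Option (Fin (k + 1)))
  | Sum.inl i => s(none, some i)
  | Sum.inr i => s(some i.castSucc, some i.succ)

/-- The `i`-th triangle of the `k`-fan: the centre and the `i`-th rim edge. -/
def fanTriangle (i : Fin k) : Finset (Option (Fin (k + 1))) :=
  {none, some i.castSucc, some i.succ}

theorem fanEdge_injective : Function.Injective (fanEdge (k := k)) := by
  rintro (i | i) (j | j) h
  all_goals
    simp only [fanEdge, Sym2.eq_iff] at h
    grind

theorem range_fanEdge : Set.range fanEdge = (fanGraph k).edgeSet := by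
  ext e
  induction e with | _ a b
  rcases a with _ | a <;> rcases b with _ | b
  all_goals simp [Sum.exists, fanEdge, fanGraph_adj_some_some, (fanGraph_adj_none_some _).symm]

theorem fanGraph_isNClique_three_iff {s : Finset (Option (Fin (k + 1)))} :
    (fanGraph k).IsNClique 3 s ↔ ∃ i, fanTriangle i = s := by
  rw [is3Clique_iff]
  constructor
  · have triangle_of_rim {a b : Fin (k + 1)} (hab : (fanGraph k).Adj (some a) (some b)) :
        ∃ i, fanTriangle i = {none, some a, some b} := by
      obtain ⟨i, hi⟩ := fanGraph_adj_some_some.mp hab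
      rcases Sym2.eq_iff.mp hi with ⟨rfl, rfl⟩ | ⟨rfl, rfl⟩
      · exact ⟨i, rfl⟩
      · exact ⟨i, by rw [fanTriangle, Finset.pair_comm]⟩
    rintro ⟨_ | a, _ | b, _ | c, hab, hac, hbc, rfl⟩
    case none.some.some => exact triangle_of_rim hbc
    case some.none.some =>
      rw [Finset.insert_comm]
      exact triangle_of_rim hac
    case some.some.none =>
      rw [Finset.pair_comm, Finset.insert_comm]
      exact triangle_of_rim hab
    case some.some.some =>
      obtain ⟨i, hi⟩ := fanGraph_adj_some_some.mp hab
      obtain ⟨j, hj⟩ := fanGraph_adj_some_some.mp hac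
      obtain ⟨l, hl⟩ := fanGraph_adj_some_some.mp hbc
      simp only [Sym2.eq_iff, Fin.ext_iff, Fin.val_castSucc, Fin.val_succ] at hi hj hl
      omega
    all_goals simp_all
  · rintro ⟨i, rfl⟩
    exact ⟨none, some i.castSucc, some i.succ, fanGraph_adj_none_some _, fanGraph_adj_none_some _,
      fanGraph_adj_some_some.mpr ⟨i, rfl⟩, rfl⟩

theorem fanEdge_mem_sym2_fanTriangle {x : Fin (k + 1) ⊕ Fin k} {i : Fin k} :
    fanEdge x ∈ (fanTriangle i).sym2 ↔ x ∈ chainTriangle i := by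
  rcases x with j | j
  all_goals
    simp only [fanEdge, fanTriangle, chainTriangle, Finset.mk_mem_sym2_iff]
    grind

/-- Sends spokes to the spine `Sum.inl` of the chain and rim edges to the apexes `Sum.inr`. -/
noncomputable def triLineFanIso (k : ℕ) : TriLine (fanGraph k) ≃g triangleChain k :=
  triLineIsoTriangleChain fanEdge fanEdge_injective range_fanEdge fanTriangle
    (fun _ => fanGraph_isNClique_three_iff) fun _ _ => fanEdge_mem_sym2_fanTriangle

end Fan

section Strip

variable {k : ℕ}

theorem stripGraph_adj {i j : Fin (k + 2)} :
    (stripGraph k).Adj i j ↔ i ≠ j ∧ (i : ℕ) ≤ j + 2 ∧ (j : ℕ) ≤ i + 2 := by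
  simp only [stripGraph, fromRel_adj, ne_eq, Fin.ext_iff]
  omega

/-- The edges of the `k`-triangle strip: the rungs join vertices at distance one along the
underlying path, the outer edges join vertices at distance two. -/
def stripEdge : Fin (k + 1) ⊕ Fin k → Sym2 (Fin (k + 2))
  | Sum.inl i => s(i.castSucc, i.succ)
  | Sum.inr i => s(i.castSucc.castSucc, i.succ.succ)

/-- The `i`-th triangle of the `k`-triangle strip: the path vertices `i`, `i + 1` and `i + 2`. -/
def stripTriangle (i : Fin k) : Finset (Fin (k + 2)) :=
  {i.castSucc.castSucc, i.castSucc.succ, i.succ.succ}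

theorem stripEdge_injective : Function.Injective (stripEdge (k := k)) := by
  rintro (i | i) (j | j) h
  all_goals
    simp only [stripEdge, Sym2.eq_iff] at h
    grind

theorem range_stripEdge : Set.range stripEdge = (stripGraph k).edgeSet := by
  ext e
  induction e with | _ a b
  constructor
  · rintro ⟨i | i, h⟩
    all_goals
      rw [← h, stripEdge, mem_edgeSet, stripGraph_adj]
      grind
  · intro hadj
    wlog hab : a < b generalizing a b
    · have hne : a ≠ b := (stripGraph k).ne_of_adj hadj
      rw [Sym2.eq_swap] at hadj ⊢
      exact this b a hadj (by order)
    have hab2 : (b : ℕ) ≤ a + 2 := (stripGraph_adj.mp hadj).2.2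
    obtain hb | hb : (b : ℕ) = a + 1 ∨ (b : ℕ) = a + 2 := by omega
    · exact ⟨Sum.inl ⟨a, by omega⟩, by simp [stripEdge, Fin.ext_iff, hb]⟩
    · exact ⟨Sum.inr ⟨a, by omega⟩, by simp [stripEdge, Fin.ext_iff, hb]⟩

theorem stripGraph_isNClique_three_iff {s : Finset (Fin (k + 2))} :
    (stripGraph k).IsNClique 3 s ↔ ∃ i, stripTriangle i = s := by
  rw [is3Clique_iff_exists_lt]
  constructor
  · rintro ⟨a, b, c, hab, hbc, -, hac, -, rfl⟩
    have hca : (c : ℕ) ≤ a + 2 := (stripGraph_adj.mp hac).2.2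
    have ha : (a : ℕ) < k := by omega
    have hb : b = ⟨a + 1, by omega⟩ := Fin.ext (by dsimp only; omega)
    have hc : c = ⟨a + 2, by omega⟩ := Fin.ext (by dsimp only; omega)
    exact ⟨⟨a, ha⟩, by rw [hb, hc]; rfl⟩
  · rintro ⟨i, rfl⟩
    refine ⟨i.castSucc.castSucc, i.castSucc.succ, i.succ.succ, ?_, ?_, ?_, ?_, ?_, rfl⟩
    all_goals grind [stripGraph_adj]

theorem stripEdge_mem_sym2_stripTriangle {x : Fin (k + 1) ⊕ Fin k} {i : Fin k} :
    stripEdge x ∈ (stripTriangle i).sym2 ↔ x ∈ chainTriangle i := by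
  rcases x with j | j
  all_goals
    simp only [stripEdge, stripTriangle, chainTriangle, Finset.mk_mem_sym2_iff]
    grind

/-- Sends edges between vertices at distance one along the path to the spine `Sum.inl` of the chain
and edges between vertices at distance two to the apexes `Sum.inr`. -/
noncomputable def triLineStripIso (k : ℕ) : TriLine (stripGraph k) ≃g triangleChain k :=
  triLineIsoTriangleChain stripEdge stripEdge_injective range_stripEdge stripTriangle
    (fun _ => stripGraph_isNClique_three_iff) fun _ _ => stripEdge_mem_sym2_stripTriangle

end Strip

/-- For `k ≥ 3`, the `k`-fan and the `k`-triangle strip have isomorphic triangular line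
graphs, and this common triangular line graph is the chain of `k` triangles
(a sequence of `k - 1` bowties, consecutive ones meeting in a triangle). -/
theorem triLine_fan_iso_strip (k : ℕ) (hk : 3 ≤ k) :
    Nonempty (TriLine (fanGraph k) ≃g TriLine (stripGraph k)) ∧
      Nonempty (TriLine (fanGraph k) ≃g triangleChain k) :=
  ⟨⟨(triLineFanIso k).trans (triLineStripIso k).symm⟩, ⟨triLineFanIso k⟩⟩
end

section
/- Let H be the graph obtained from two 7-suns S and S′ by identifying a bowtie of S with a bowtie of S′ via an EQUAL gadget, and suppose H is a triangular line graph with preimage G. Then the subgraphs T⁻¹(S) and T⁻¹(S′) of G (induced by the edges of G corresponding to the vertices of S and of S′, respectively) are isomorphic: either both are 7-wheels or both are squared 7-cycles. -/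
open SimpleGraph

/-- Vertex type of a 7-sun: `Sum.inl i` are the cycle vertices `cᵢ`, and `Sum.inr i` is
the degree-two vertex `pᵢ` attached to the cycle edge `{cᵢ, cᵢ₊₁}`. -/
abbrev SunV : Type := ZMod 7 ⊕ ZMod 7

/-- Two disjoint copies of the 7-sun: copy `false` is `S` and copy `true` is `S'`. -/
def twoSuns : SimpleGraph (Bool × SunV) :=
  SimpleGraph.fromRel (fun a b => a.1 = b.1 ∧ (sunGraph 7).Adj a.2 b.2)

/-- The EQUAL-gadget identification between the bowtie `{c₀,c₁,c₂,p₀,p₁}` (center `c₁`)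
of `S` and the bowtie `{c₀',c₁',c₂',p₀',p₁'}` (center `c₁'`) of `S'`: the centers are
identified, and in each pair of corresponding triangles the on-cycle vertex of one sun is
identified with the off-cycle vertex of the other. -/
def equalRel : (Bool × SunV) → (Bool × SunV) → Prop := fun x y =>
  (x = (false, Sum.inl 1) ∧ y = (true, Sum.inl 1)) ∨
  (x = (false, Sum.inl 0) ∧ y = (true, Sum.inr 0)) ∨
  (x = (false, Sum.inr 0) ∧ y = (true, Sum.inl 0)) ∨
  (x = (false, Sum.inl 2) ∧ y = (true, Sum.inr 1)) ∨
  (x = (false, Sum.inr 1) ∧ y = (true, Sum.inl 2))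

/-- Two 7-suns glued at a bowtie via the EQUAL gadget. -/
def equalGadget : SimpleGraph (Quotient (Relation.EqvGen.setoid equalRel)) :=
  Glue twoSuns equalRel

/-- The vertices of the glued graph coming from the copy `c` of the 7-sun. -/
def equalSunVerts (c : Bool) : Set (Quotient (Relation.EqvGen.setoid equalRel)) :=
  Set.range (fun v : SunV => Quotient.mk _ (c, v))

/-!
A `7`-sun is a cyclic sequence of triangles `cᵢ, cᵢ₊₁, pᵢ` glued along the `cᵢ`, so its preimage
unrolls to an infinite strip of triangles with rungs `cᵢ`, in which the edge `pᵢ` joins the old and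
the new position of the one endpoint that moves from `cᵢ` to `cᵢ₊₁`. After seven steps the strip
closes up, either with its two sides in place or with the sides exchanged.

The edges `pᵢ` traversed by one side between two times form a walk. Since the edges are distinct
and no triangle contains two of the `pᵢ`, such a walk has at least three steps if it leads across a
rung, and it has no step or at least four if it is closed. Seven moves in all therefore leave little
room. If the strip closes up with its sides in place, then one side never moves, and it is the hub
of a wheel. If the sides are exchanged, then a side making two consecutive moves would have to make
five moves, and the other side at least three; so the sides move alternately, which is a squared
cycle.

The gadget identifies `p₀`, `p₁` of each sun with `c₀`, `c₂` of the other. In a wheel `p₀` and `p₁`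
share a vertex, in a squared cycle `c₀` and `c₂` do not, so both suns have the same kind of
preimage.
-/

section ChangeCount

variable {V : Type*} {t : ℕ → V} {n m j r : ℕ}

open Classical in
/-- The number of times `i` with `n ≤ i < m` at which the sequence `t` moves, i.e. takes a new
value at `i + 1`. -/
noncomputable def changeCount (t : ℕ → V) (n m : ℕ) : ℕ :=
  ((Finset.Ico n m).filter fun i => t (i + 1) ≠ t i).card

theorem changeCount_add_changeCount (hnj : n ≤ j) (hjm : j ≤ m) :
    changeCount t n j + changeCount t j m = changeCount t n m := by
  classical
  rw [changeCount, changeCount, changeCount, ← Finset.Ico_union_Ico_eq_Ico hnj hjm,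
    Finset.filter_union, Finset.card_union_of_disjoint]
  exact Finset.disjoint_filter_filter (Finset.Ico_disjoint_Ico_consecutive n j m)

theorem changeCount_succ_self_of_eq (h : t (n + 1) = t n) : changeCount t n (n + 1) = 0 := by
  simp [changeCount, h]

theorem changeCount_succ_self_of_ne (h : t (n + 1) ≠ t n) : changeCount t n (n + 1) = 1 := by
  classical simp [changeCount, Finset.filter_singleton, h]

theorem eq_of_changeCount_eq_zero (h : changeCount t n m = 0) (hnj : n ≤ j) (hjm : j ≤ m) :
    t j = t n := by
  classical
  induction j, hnj using Nat.le_induction with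
  | base => rfl
  | succ i hni ih =>
    rw [← ih (by lia)]
    rw [changeCount, Finset.card_eq_zero, Finset.filter_eq_empty_iff] at h
    exact not_not.1 (h (Finset.mem_Ico.2 ⟨hni, hjm⟩))

theorem exists_last_change (h : changeCount t n m = r + 1) (hnm : n ≤ m) :
    ∃ j, n ≤ j ∧ j < m ∧ t (j + 1) ≠ t j ∧ t (j + 1) = t m ∧ changeCount t n j = r := by
  induction m, hnm using Nat.le_induction with
  | base => simp [changeCount] at h
  | succ m hnm ih =>
    rw [← changeCount_add_changeCount hnm m.le_succ] at h
    by_cases hm : t (m + 1) = t m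
    · rw [changeCount_succ_self_of_eq hm] at h
      obtain ⟨j, hnj, hjm, hne, heq, hr⟩ := ih h
      exact ⟨j, hnj, hjm.trans m.lt_succ_self, hne, heq.trans hm.symm, hr⟩
    · rw [changeCount_succ_self_of_ne hm] at h
      exact ⟨m, hnm, m.lt_succ_self, hm, rfl, Nat.succ.inj h⟩

end ChangeCount

section Strip

variable {V : Type*} {k : ℕ} {E : ZMod k ⊕ ZMod k → Sym2 V} {t b : ℕ → V}

/-- `E` assigns to the vertices of the `k`-sun the edges of a preimage: distinct non-loops, such
that each triangle `cᵢ, cᵢ₊₁, pᵢ` of the sun comes from a triangle, while no triangle contains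
two of the (pairwise nonadjacent) `pᵢ`. -/
structure IsSunPreimage (E : ZMod k ⊕ ZMod k → Sym2 V) : Prop where
  injective : Function.Injective E
  not_isDiag : ∀ x, ¬(E x).IsDiag
  exists_triangle : ∀ i, ∃ u v w,
    E (.inl i) = s(u, v) ∧ E (.inl (i + 1)) = s(v, w) ∧ E (.inr i) = s(u, w)
  no_triangle : ∀ i j x u v w,
    E (.inr i) = s(u, v) → E (.inr j) = s(v, w) → E x ≠ s(u, w)

/-- The triangles of a sun preimage unrolled into an infinite strip with top side `t` and bottom
side `b`: the rungs are the edges `cₙ`, and from one rung to the next exactly one endpoint moves,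
along the edge `pₙ`. -/
structure IsStrip (E : ZMod k ⊕ ZMod k → Sym2 V) (t b : ℕ → V) : Prop where
  rung : ∀ n : ℕ, E (.inl n) = s(t n, b n)
  move : ∀ n : ℕ, b (n + 1) = b n ∧ E (.inr n) = s(t n, t (n + 1)) ∨
    t (n + 1) = t n ∧ E (.inr n) = s(b n, b (n + 1))

theorem IsSunPreimage.exists_isStrip (hE : IsSunPreimage E) : ∃ t b, IsStrip E t b := by
  have exists_next (n : ℕ) (x : V × V) (hx : E (.inl n) = s(x.1, x.2)) :
      ∃ y : V × V, E (.inl (n + 1)) = s(y.1, y.2) ∧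
        (y.2 = x.2 ∧ E (.inr n) = s(x.1, y.1) ∨ y.1 = x.1 ∧ E (.inr n) = s(x.2, y.2)) := by
    obtain ⟨u, v, w, hc, hc', hp⟩ := hE.exists_triangle n
    rcases Sym2.eq_iff.1 (hx.symm.trans hc) with ⟨hu, hv⟩ | ⟨hv, hu⟩
    · exact ⟨(w, v), hc'.trans Sym2.eq_swap, .inl ⟨hv.symm, hu ▸ hp⟩⟩
    · exact ⟨(v, w), hc', .inr ⟨hv.symm, hu ▸ hp⟩⟩
  obtain ⟨u, v, -, hc, -⟩ := hE.exists_triangle ((0 : ℕ) : ZMod k)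
  have : Nonempty V := ⟨u⟩
  choose! next hrung hmove using exists_next
  let state (n : ℕ) : V × V := n.rec (u, v) next
  have hstate (n : ℕ) : E (.inl n) = s((state n).1, (state n).2) := by
    induction n with
    | zero => exact hc
    | succ n ih => exact_mod_cast hrung n _ ih
  exact ⟨fun n => (state n).1, fun n => (state n).2, hstate, fun n => hmove n _ (hstate n)⟩

namespace IsStrip

theorem symm (h : IsStrip E t b) : IsStrip E b t where
  rung n := (h.rung n).trans Sym2.eq_swap
  move n := (h.move n).symm

theorem shift (h : IsStrip E t b) : IsStrip E (fun n => t (n + k)) (fun n => b (n + k)) where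
  rung n := by simpa using h.rung (n + k)
  move n := by simpa [Nat.add_right_comm] using h.move (n + k)

theorem top_ne_bot (hE : IsSunPreimage E) (h : IsStrip E t b) (n : ℕ) : t n ≠ b n := by
  simpa [h.rung n] using hE.not_isDiag (.inl n)

theorem top_succ_ne_bot (hE : IsSunPreimage E) (h : IsStrip E t b) (n : ℕ) :
    t (n + 1) ≠ b n := by
  rcases h.move n with ⟨hb, -⟩ | ⟨ht, -⟩
  · exact hb ▸ h.top_ne_bot hE (n + 1)
  · exact ht ▸ h.top_ne_bot hE n

theorem bot_succ_eq_iff (hE : IsSunPreimage E) (h : IsStrip E t b) (n : ℕ) :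
    b (n + 1) = b n ↔ t (n + 1) ≠ t n := by
  have hp := hE.not_isDiag (.inr n)
  grind [h.move n, Sym2.mk_isDiag_iff]

theorem spike_of_top_ne (h : IsStrip E t b) {n : ℕ} (hn : t (n + 1) ≠ t n) :
    E (.inr n) = s(t n, t (n + 1)) :=
  (h.move n).elim And.right fun h => absurd h.1 hn

theorem spike_of_top_eq (hE : IsSunPreimage E) (h : IsStrip E t b) {n : ℕ}
    (hn : t (n + 1) = t n) : E (.inr n) = s(b n, b (n + 1)) :=
  h.symm.spike_of_top_ne ((h.symm.bot_succ_eq_iff hE n).1 hn)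

theorem eq_of_zero_eq (hE : IsSunPreimage E) (h : IsStrip E t b) {t' b' : ℕ → V}
    (h' : IsStrip E t' b') (h₀ : t 0 = t' 0) (n : ℕ) : t n = t' n ∧ b n = b' n := by
  have hrung (n : ℕ) : t n = t' n ∧ b n = b' n ∨ t n = b' n ∧ b n = t' n :=
    Sym2.eq_iff.1 ((h.rung n).symm.trans (h'.rung n))
  induction n with
  | zero => exact (hrung 0).resolve_right fun hs => h.top_ne_bot hE 0 (by grind)
  | succ n ih =>
    refine (hrung (n + 1)).resolve_right fun ⟨hs, hs'⟩ => ?_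
    have ht : t (n + 1) ≠ t n := by
      rw [hs, ih.1]; exact h'.symm.top_succ_ne_bot hE n
    have hb : b (n + 1) ≠ b n := by
      rw [hs', ih.2]; exact h'.top_succ_ne_bot hE n
    exact hb ((h.bot_succ_eq_iff hE n).2 ht)

theorem periodic_or_antiperiodic (hE : IsSunPreimage E) (h : IsStrip E t b) :
    (∀ n, t (n + k) = t n ∧ b (n + k) = b n) ∨ (∀ n, t (n + k) = b n ∧ b (n + k) = t n) := by
  have hrung : s(t (0 + k), b (0 + k)) = s(t 0, b 0) := by
    rw [← h.rung 0, ← h.shift.rung 0]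
  rcases Sym2.eq_iff.1 hrung with ⟨h₀, -⟩ | ⟨h₀, -⟩
  · exact .inl (h.shift.eq_of_zero_eq hE h h₀)
  · exact .inr (h.shift.eq_of_zero_eq hE h.symm h₀)

theorem changeCount_top_add_changeCount_bot (hE : IsSunPreimage E) (h : IsStrip E t b)
    (n m : ℕ) : changeCount t n m + changeCount b n m = m - n := by
  classical
  have hbot (i : ℕ) : b (i + 1) ≠ b i ↔ ¬t (i + 1) ≠ t i := (h.bot_succ_eq_iff hE i).not
  simp only [changeCount, hbot]
  rw [Finset.card_filter_add_card_filter_not, Nat.card_Ico]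

theorem exists_last_spike (h : IsStrip E t b) {n m r : ℕ} (hr : changeCount t n m = r + 1)
    (hnm : n ≤ m) : ∃ j : ℕ, n ≤ j ∧ j < m ∧ E (.inr j) = s(t j, t m) ∧ changeCount t n j = r := by
  obtain ⟨j, hnj, hjm, hne, heq, hr⟩ := exists_last_change hr hnm
  exact ⟨j, hnj, hjm, heq ▸ h.spike_of_top_ne hne, hr⟩

theorem three_le_changeCount_of_top_eq_bot (hE : IsSunPreimage E) (h : IsStrip E t b) {n m : ℕ}
    (hnm : n ≤ m) (hcross : t m = b n) : 3 ≤ changeCount t n m := by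
  have hrung : E (.inl n) = s(t n, t m) := hcross ▸ h.rung n
  by_contra! hlt
  obtain hr | hr | hr : changeCount t n m = 0 ∨ changeCount t n m = 1 ∨ changeCount t n m = 2 := by
    lia
  · exact h.top_ne_bot hE n ((eq_of_changeCount_eq_zero hr hnm le_rfl).symm.trans hcross)
  · obtain ⟨j, hnj, -, hj, hr⟩ := h.exists_last_spike hr hnm
    rw [eq_of_changeCount_eq_zero hr hnj le_rfl, ← hrung] at hj
    exact Sum.inr_ne_inl (hE.injective hj)
  · obtain ⟨j, hnj, -, hj, hr⟩ := h.exists_last_spike hr hnm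
    obtain ⟨i, hni, -, hi, hr⟩ := h.exists_last_spike hr hnj
    rw [eq_of_changeCount_eq_zero hr hni le_rfl] at hi
    exact hE.no_triangle _ _ _ _ _ _ hi hj hrung

theorem changeCount_eq_zero_or_four_le_of_top_eq (hE : IsSunPreimage E) (h : IsStrip E t b)
    {n m : ℕ} (hnm : n ≤ m) (hmk : m ≤ n + k) (hclosed : t m = t n) :
    changeCount t n m = 0 ∨ 4 ≤ changeCount t n m := by
  by_contra! hlt
  obtain hr | hr | hr : changeCount t n m = 1 ∨ changeCount t n m = 2 ∨ changeCount t n m = 3 := by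
    lia
  all_goals
    obtain ⟨j, hnj, hjm, hj, hr⟩ := h.exists_last_spike hr hnm
    rw [hclosed] at hj
  · rw [eq_of_changeCount_eq_zero hr hnj le_rfl] at hj
    exact hE.not_isDiag (.inr j) (by simp [hj])
  all_goals obtain ⟨i, hni, hij, hi, hr⟩ := h.exists_last_spike hr hnj
  · rw [eq_of_changeCount_eq_zero hr hni le_rfl, Sym2.eq_swap, ← hj] at hi
    have hmod : i ≡ j [MOD k] :=
      (ZMod.natCast_eq_natCast_iff _ _ _).1 (Sum.inr_injective (hE.injective hi))
    exact hij.ne (hmod.eq_of_abs_lt (by rw [abs_lt]; lia))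
  · obtain ⟨l, hnl, -, hl, hr⟩ := h.exists_last_spike hr hni
    rw [eq_of_changeCount_eq_zero hr hnl le_rfl] at hl
    exact hE.no_triangle _ _ _ _ _ _ hl hi (hj.trans Sym2.eq_swap)

theorem top_succ_succ_eq_of_antiperiodic (hE : IsSunPreimage E) (h : IsStrip E t b)
    (hk : k ≤ 7) (hanti : ∀ n, t (n + k) = b n ∧ b (n + k) = t n) {n : ℕ}
    (hn : t (n + 1) ≠ t n) : t (n + 2) = t (n + 1) := by
  by_contra hn'
  have hb : b (n + 2) = b n :=
    ((h.bot_succ_eq_iff hE (n + 1)).2 hn').trans ((h.bot_succ_eq_iff hE n).2 hn)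
  have hbot := h.symm.three_le_changeCount_of_top_eq_bot hE (Nat.le_add_right n k) (hanti n).2
  have hsum := h.changeCount_top_add_changeCount_bot hE n (n + k)
  have htop : 3 ≤ changeCount t (n + 2) (n + k) :=
    h.three_le_changeCount_of_top_eq_bot hE (by lia) ((hanti n).1.trans hb.symm)
  have htwo : changeCount t n (n + 2) = 2 := by
    rw [← changeCount_add_changeCount n.le_succ (n + 1).le_succ, changeCount_succ_self_of_ne hn,
      changeCount_succ_self_of_ne hn']
  have := changeCount_add_changeCount (t := t) (n := n) (j := n + 2) (m := n + k)
  lia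

theorem top_succ_succ_eq_iff_of_antiperiodic (hE : IsSunPreimage E) (h : IsStrip E t b)
    (hk : k ≤ 7) (hanti : ∀ n, t (n + k) = b n ∧ b (n + k) = t n) (n : ℕ) :
    t (n + 2) = t (n + 1) ↔ t (n + 1) ≠ t n := by
  refine ⟨fun hn hn' => ?_, h.top_succ_succ_eq_of_antiperiodic hE hk hanti⟩
  have hb : b (n + 2) = b (n + 1) := h.symm.top_succ_succ_eq_of_antiperiodic hE hk
    (fun n => (hanti n).symm) ((h.symm.bot_succ_eq_iff hE n).1 hn')
  exact (h.bot_succ_eq_iff hE (n + 1)).1 hb hn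

end IsStrip

end Strip

section Classification

variable {V : Type*} {k : ℕ} {E : ZMod k ⊕ ZMod k → Sym2 V} {t b : ℕ → V}

/-- The `k`-wheel as a preimage of the `k`-sun: spokes correspond to the vertices `cᵢ`, rim edges
to the vertices `pᵢ`. -/
def wheelEdge (k : ℕ) : ZMod k ⊕ ZMod k → Sym2 (Option (ZMod k))
  | .inl i => s(none, some i)
  | .inr i => s(some i, some (i + 1))

/-- The squared `k`-cycle as a preimage of the `k`-sun: edges of the cycle correspond to the
vertices `cᵢ`, edges between vertices at distance two to the vertices `pᵢ`. -/
def squaredCycleEdge (k : ℕ) : ZMod k ⊕ ZMod k → Sym2 (ZMod k)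
  | .inl i => s(i, i + 1)
  | .inr i => s(i, i + 2)

theorem exists_zmod_eq_of_periodic {f : ℕ → V} (hf : f.Periodic k) :
    ∃ F : ZMod k → V, ∀ n : ℕ, F n = f n :=
  ⟨fun i => f i.val, fun n => by simp only [ZMod.val_natCast, hf.map_mod_nat]⟩

variable [NeZero k]

namespace IsStrip

theorem exists_wheelEdge_of_top_const (hE : IsSunPreimage E) (h : IsStrip E t b)
    (ht : ∀ n, t n = t 0) (hb : b.Periodic k) : ∃ φ, ∀ x, E x = (wheelEdge k x).map φ := by
  obtain ⟨B, hB⟩ := exists_zmod_eq_of_periodic hb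
  refine ⟨fun a => a.elim (t 0) B, ?_⟩
  rintro (i | i) <;> obtain ⟨n, rfl⟩ := ZMod.natCast_zmod_surjective i
  · simpa [wheelEdge, hB, ht] using h.rung n
  · have hB' : B (n + 1) = b (n + 1) := mod_cast hB (n + 1)
    simpa [wheelEdge, hB, hB'] using h.spike_of_top_eq hE ((ht (n + 1)).trans (ht n).symm)

theorem exists_wheelEdge_of_changeCount_top_eq_zero (hE : IsSunPreimage E) (h : IsStrip E t b)
    (ht : t.Periodic k) (hb : b.Periodic k) (hcount : changeCount t 0 k = 0) :
    ∃ φ, ∀ x, E x = (wheelEdge k x).map φ := by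
  refine h.exists_wheelEdge_of_top_const hE (fun n => ?_) hb
  rw [← ht.map_mod_nat]
  exact eq_of_changeCount_eq_zero hcount (Nat.zero_le _) (n.mod_lt (NeZero.pos k)).le

theorem exists_wheelEdge_of_periodic (hE : IsSunPreimage E) (h : IsStrip E t b) (hk : k ≤ 7)
    (ht : t.Periodic k) (hb : b.Periodic k) : ∃ φ, ∀ x, E x = (wheelEdge k x).map φ := by
  have hsum := h.changeCount_top_add_changeCount_bot hE 0 k
  have htop := h.changeCount_eq_zero_or_four_le_of_top_eq hE (Nat.zero_le k) (Nat.le_add_left k 0)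
    ht.eq
  have hbot := h.symm.changeCount_eq_zero_or_four_le_of_top_eq hE (Nat.zero_le k)
    (Nat.le_add_left k 0) hb.eq
  obtain hzero | hzero : changeCount t 0 k = 0 ∨ changeCount b 0 k = 0 := by lia
  · exact h.exists_wheelEdge_of_changeCount_top_eq_zero hE ht hb hzero
  · exact h.symm.exists_wheelEdge_of_changeCount_top_eq_zero hE hb ht hzero

theorem exists_squaredCycleEdge_of_alternating (hE : IsSunPreimage E) (h : IsStrip E t b)
    (hanti : ∀ n, t (n + k) = b n ∧ b (n + k) = t n)
    (halt : ∀ n, t (n + 2) = t (n + 1) ↔ t (n + 1) ≠ t n) :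
    ∃ φ, ∀ x, E x = (squaredCycleEdge k x).map φ := by
  classical
  -- The endpoint of the rung `cₙ` that moves next.
  let v (n : ℕ) : V := if t (n + 1) = t n then b n else t n
  have hvt {n : ℕ} (hn : t (n + 1) ≠ t n) : v n = t n := if_neg hn
  have hvb {n : ℕ} (hn : t (n + 1) = t n) : v n = b n := if_pos hn
  have hb := h.bot_succ_eq_iff hE
  have hv : v.Periodic k := fun n => by grind
  have hvs (n : ℕ) : E (.inl n) = s(v n, v (n + 1)) ∧ E (.inr n) = s(v n, v (n + 2)) := by
    by_cases hn : t (n + 1) = t n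
    · have hn₁ : t (n + 2) ≠ t (n + 1) := fun h => (halt n).1 h hn
      have hn₂ : t (n + 3) = t (n + 2) := (halt (n + 1)).2 hn₁
      rw [hvb hn, hvt hn₁, hvb hn₂, hn, (hb (n + 1)).2 hn₁]
      exact ⟨(h.rung n).trans Sym2.eq_swap, h.spike_of_top_eq hE hn⟩
    · have hn₁ : t (n + 2) = t (n + 1) := (halt n).2 hn
      have hn₂ : t (n + 3) ≠ t (n + 2) := fun h => (halt (n + 1)).1 h hn₁
      rw [hvt hn, hvb hn₁, hvt hn₂, hn₁, (hb n).2 hn]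
      exact ⟨h.rung n, h.spike_of_top_ne hn⟩
  obtain ⟨φ, hφ⟩ := exists_zmod_eq_of_periodic hv
  refine ⟨φ, ?_⟩
  rintro (i | i) <;> obtain ⟨n, rfl⟩ := ZMod.natCast_zmod_surjective i
  · have hφ' : φ (n + 1) = v (n + 1) := mod_cast hφ (n + 1)
    simpa [squaredCycleEdge, hφ, hφ'] using (hvs n).1
  · have hφ' : φ (n + 2) = v (n + 2) := mod_cast hφ (n + 2)
    simpa [squaredCycleEdge, hφ, hφ'] using (hvs n).2

end IsStrip

theorem IsSunPreimage.wheelEdge_or_squaredCycleEdge (hE : IsSunPreimage E) (hk : k ≤ 7) :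
    (∃ φ, ∀ x, E x = (wheelEdge k x).map φ) ∨ ∃ φ, ∀ x, E x = (squaredCycleEdge k x).map φ := by
  obtain ⟨t, b, h⟩ := hE.exists_isStrip
  rcases h.periodic_or_antiperiodic hE with hper | hanti
  · exact .inl (h.exists_wheelEdge_of_periodic hE hk (fun n => (hper n).1) fun n => (hper n).2)
  · exact .inr (h.exists_squaredCycleEdge_of_alternating hE hanti
      (h.top_succ_succ_eq_iff_of_antiperiodic hE hk hanti))

end Classification

section TriLine

variable {V : Type*} {G : SimpleGraph V} {e₁ e₂ e₃ : G.edgeSet} {u v w : V}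

theorem TriLine.adj_of_triangle (h₁ : (e₁ : Sym2 V) = s(u, v)) (h₂ : (e₂ : Sym2 V) = s(v, w))
    (h₃ : (e₃ : Sym2 V) = s(u, w)) : (TriLine G).Adj e₁ e₂ :=
  ⟨u, v, w, G.mem_edgeSet.1 (h₁ ▸ e₁.2), G.mem_edgeSet.1 (h₂ ▸ e₂.2),
    G.mem_edgeSet.1 (h₃ ▸ e₃.2), h₁, h₂⟩

theorem TriLine.exists_triangle_of_adj (h : (TriLine G).Adj e₁ e₂) :
    ∃ u v w, (e₁ : Sym2 V) = s(u, v) ∧ (e₂ : Sym2 V) = s(v, w) ∧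
      ∃ e₃ : G.edgeSet, (e₃ : Sym2 V) = s(u, w) :=
  let ⟨u, v, w, _, _, huw, h₁, h₂⟩ := h
  ⟨u, v, w, h₁, h₂, ⟨s(u, w), huw⟩, rfl⟩

end TriLine

theorem sunGraph_adj_inl_succ {k : ℕ} [Nontrivial (ZMod k)] (i : ZMod k) :
    (sunGraph k).Adj (.inl i) (.inl (i + 1)) :=
  ⟨by simp, .inl ⟨i, .inl ⟨rfl, rfl⟩⟩⟩

theorem not_sunGraph_adj_inr_inr {k : ℕ} (i j : ZMod k) : ¬(sunGraph k).Adj (.inr i) (.inr j) := by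
  simp [sunGraph]

theorem isSunPreimage_of_embedding {V W : Type*} {k : ℕ} [Nontrivial (ZMod k)] {G : SimpleGraph V}
    {H : SimpleGraph W} (f : TriLine G ≃g H) (g : sunGraph k ↪g H)
    (hg : ∀ i a, H.Adj a (g (.inl i)) → H.Adj a (g (.inl (i + 1))) → a = g (.inr i)) :
    IsSunPreimage fun x => (f.symm (g x) : Sym2 V) where
  injective := Subtype.val_injective.comp (f.symm.injective.comp g.injective)
  not_isDiag x := G.not_isDiag_of_mem_edgeSet (f.symm (g x)).2
  exists_triangle i := by
    have hadj : (TriLine G).Adj (f.symm (g (.inl i))) (f.symm (g (.inl (i + 1)))) :=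
      f.symm.map_adj_iff.2 (g.map_adj_iff.2 (sunGraph_adj_inl_succ i))
    obtain ⟨u, v, w, h₁, h₂, e, h₃⟩ := TriLine.exists_triangle_of_adj hadj
    refine ⟨u, v, w, h₁, h₂, ?_⟩
    have he₁ : (TriLine G).Adj e (f.symm (g (.inl i))) :=
      TriLine.adj_of_triangle (h₃.trans Sym2.eq_swap) h₁ (h₂.trans Sym2.eq_swap)
    have he₂ : (TriLine G).Adj e (f.symm (g (.inl (i + 1)))) :=
      TriLine.adj_of_triangle h₃ (h₂.trans Sym2.eq_swap) h₁
    have he : f e = g (.inr i) :=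
      hg i (f e) (by simpa using f.map_adj_iff.2 he₁) (by simpa using f.map_adj_iff.2 he₂)
    rw [← he, f.symm_apply_apply, h₃]
  no_triangle i j x u v w hi hj hx :=
    not_sunGraph_adj_inr_inr i j
      (g.map_adj_iff.1 (f.symm.map_adj_iff.1 (TriLine.adj_of_triangle hi hj hx)))

section EdgePre

variable {ι α V W : Type*} {A : SimpleGraph α} {G : SimpleGraph V} {H : SimpleGraph W}
  {f : TriLine G ≃g H} {g : ι → W} {l : ι → Sym2 α} {φ : α → V}

theorem injective_of_injOn_edgeSet (φ : A →g G) (hφ : A.edgeSet.InjOn (Sym2.map φ))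
    (hA : ∀ a b, a ≠ b → A.Adj a b ∨ (A.commonNeighbors a b).Nonempty) :
    Function.Injective φ := by
  intro a b hab
  by_contra hne
  rcases hA a b hne with hadj | ⟨c, hac, hbc⟩
  · exact (φ.map_adj hadj).ne hab
  · have heq : s(a, c) = s(b, c) := hφ hac hbc (by simp [hab])
    exact hne (Sym2.congr_left.1 heq)

theorem edgePre_range_adj {a b : V} :
    (edgePre G f (Set.range g)).Adj a b ↔ ∃ x, (f.symm (g x) : Sym2 V) = s(a, b) := by
  constructor
  · rintro ⟨-, e, he, x, hx⟩
    exact ⟨x, by rw [hx, f.symm_apply_apply, he]⟩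
  · rintro ⟨x, hx⟩
    exact ⟨G.mem_edgeSet.1 (hx ▸ (f.symm (g x)).2), _, hx, x, (f.apply_symm_apply _).symm⟩

theorem mem_verts_edgePre_range {a : V} :
    a ∈ (edgePre G f (Set.range g)).verts ↔ ∃ b x, (f.symm (g x) : Sym2 V) = s(a, b) := by
  refine ⟨?_, fun ⟨b, hb⟩ => (edgePre_range_adj.2 hb).fst_mem⟩
  rintro ⟨b, e, he, x, hx⟩
  exact ⟨b, x, by rw [hx, f.symm_apply_apply, he]⟩

theorem mem_map_image_edgeSet {a b : V} :
    s(a, b) ∈ Sym2.map φ '' A.edgeSet ↔ Relation.Map A.Adj φ φ a b := by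
  constructor
  · rintro ⟨⟨c, d⟩, hcd, heq⟩
    rcases Sym2.eq_iff.1 heq with ⟨rfl, rfl⟩ | ⟨rfl, rfl⟩
    · exact ⟨c, d, hcd, rfl, rfl⟩
    · exact ⟨d, c, A.adj_symm hcd, rfl, rfl⟩
  · rintro ⟨c, d, hcd, rfl, rfl⟩
    exact ⟨s(c, d), hcd, Sym2.map_mk ..⟩

theorem exists_symm_eq_iff_map_adj (hl : Set.range l = A.edgeSet)
    (h : ∀ x, (f.symm (g x) : Sym2 V) = (l x).map φ) {a b : V} :
    (∃ x, (f.symm (g x) : Sym2 V) = s(a, b)) ↔ Relation.Map A.Adj φ φ a b := by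
  simp only [h, ← mem_map_image_edgeSet, ← hl, ← Set.range_comp, Set.mem_range,
    Function.comp_apply]

theorem exists_copy_coe_eq (hl : Set.range l = A.edgeSet)
    (hA : ∀ a b, a ≠ b → A.Adj a b ∨ (A.commonNeighbors a b).Nonempty)
    (hg : Function.Injective g) (h : ∀ x, (f.symm (g x) : Sym2 V) = (l x).map φ) :
    ∃ F : A.Copy G, ⇑F = φ := by
  let hom : A →g G := ⟨φ, fun hcd => (edgePre_range_adj.2
    ((exists_symm_eq_iff_map_adj hl h).2 ⟨_, _, hcd, rfl, rfl⟩)).adj_sub⟩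
  refine ⟨hom.toCopy (injective_of_injOn_edgeSet hom ?_ hA), rfl⟩
  rw [← hl]
  rintro _ ⟨x, rfl⟩ _ ⟨y, rfl⟩ hxy
  have hxy : (f.symm (g x) : Sym2 V) = f.symm (g y) := (h x).trans (hxy.trans (h y).symm)
  rw [hg (f.symm.injective (Subtype.ext hxy))]

theorem nonempty_edgePre_range_iso [Nontrivial α] (hl : Set.range l = A.edgeSet)
    (hA : ∀ a b, a ≠ b → A.Adj a b ∨ (A.commonNeighbors a b).Nonempty)
    (hg : Function.Injective g) (h : ∀ x, (f.symm (g x) : Sym2 V) = (l x).map φ) :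
    Nonempty ((edgePre G f (Set.range g)).coe ≃g A) := by
  obtain ⟨F, rfl⟩ := exists_copy_coe_eq hl hA hg h
  have hmap {a b : V} := exists_symm_eq_iff_map_adj hl h (a := a) (b := b)
  have hsub : edgePre G f (Set.range g) = F.toSubgraph := by
    ext a b
    · simp only [mem_verts_edgePre_range, hmap, Subgraph.map_verts, Subgraph.verts_top,
        Set.image_univ]
      constructor
      · rintro ⟨_, c, _, _, rfl, _⟩
        exact ⟨c, rfl⟩
      · rintro ⟨c, rfl⟩
        obtain ⟨d, hd⟩ := exists_ne c
        rcases hA c d hd.symm with hcd | ⟨e, hce, -⟩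
        · exact ⟨F d, c, d, hcd, rfl, rfl⟩
        · exact ⟨F e, c, e, hce, rfl, rfl⟩
    · rw [edgePre_range_adj, hmap]
      rfl
  exact ⟨hsub ▸ F.isoToSubgraph.symm⟩

end EdgePre

section Models

variable {k : ℕ}

theorem range_wheelEdge [Nontrivial (ZMod k)] :
    Set.range (wheelEdge k) = (wheelGraph k).edgeSet := by
  ext p
  constructor
  · rintro ⟨i | i, rfl⟩ <;> simp [wheelEdge, wheelGraph]
  · induction p with | _ a b
    rintro ⟨hne, (⟨i, rfl, rfl⟩ | ⟨rfl, hb⟩) | ⟨i, rfl, rfl⟩ | ⟨rfl, ha⟩⟩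
    · exact ⟨.inr i, rfl⟩
    · exact ⟨.inl (b.get (Option.isSome_iff_ne_none.2 hb)), by simp [wheelEdge]⟩
    · exact ⟨.inr i, Sym2.eq_swap⟩
    · exact ⟨.inl (a.get (Option.isSome_iff_ne_none.2 ha)), by simp [wheelEdge]⟩

theorem wheelGraph_adj_or_commonNeighbors_nonempty {a b : Option (ZMod k)} (hab : a ≠ b) :
    (wheelGraph k).Adj a b ∨ ((wheelGraph k).commonNeighbors a b).Nonempty := by
  match a, b with
  | none, none => exact absurd rfl hab
  | none, some j => exact .inl (wheelGraph_adj_none_some j)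
  | some i, none => exact .inl (wheelGraph_adj_none_some i).symm
  | some i, some j =>
    exact .inr ⟨none, (wheelGraph_adj_none_some i).symm, (wheelGraph_adj_none_some j).symm⟩

theorem range_squaredCycleEdge [Nontrivial (ZMod k)] (htwo : (2 : ZMod k) ≠ 0) :
    Set.range (squaredCycleEdge k) = (squaredCycleGraph k).edgeSet := by
  ext p
  constructor
  · rintro ⟨i | i, rfl⟩ <;> simp [squaredCycleEdge, squaredCycleGraph, htwo]
  · induction p with | _ i j
    rintro ⟨-, ((rfl : j = i + 1) | (rfl : j = i + 2)) | (rfl : i = j + 1) | (rfl : i = j + 2)⟩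
    · exact ⟨.inl i, rfl⟩
    · exact ⟨.inr i, rfl⟩
    · exact ⟨.inl j, Sym2.eq_swap⟩
    · exact ⟨.inr j, Sym2.eq_swap⟩

instance : DecidableRel (squaredCycleGraph k).Adj :=
  inferInstanceAs (DecidableRel (SimpleGraph.fromRel _).Adj)

theorem squaredCycleGraph_seven_adj_or_exists_adj : ∀ i j : ZMod 7, i ≠ j →
    (squaredCycleGraph 7).Adj i j ∨
      ∃ l, (squaredCycleGraph 7).Adj i l ∧ (squaredCycleGraph 7).Adj j l := by
  decide

end Models

section Gadget

theorem quotient_mk_eqvGen_eq_iff {ι : Type*} {R : ι → ι → Prop}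
    (hright : ∀ ⦃a b c⦄, R a b → R a c → b = c) (hleft : ∀ ⦃a b c⦄, R b a → R c a → b = c)
    (hchain : ∀ ⦃a b c⦄, R a b → ¬R b c) {a b : ι} :
    Quotient.mk (Relation.EqvGen.setoid R) a = Quotient.mk _ b ↔ a = b ∨ R a b ∨ R b a := by
  rw [Quotient.eq]
  constructor
  · intro (h : Relation.EqvGen R a b)
    induction h with
    | rel a b h => exact .inr (.inl h)
    | refl a => exact .inl rfl
    | symm a b _ ih => exact ih.imp Eq.symm Or.symm
    | trans a b c _ _ hab hbc => grind
  · rintro (rfl | h | h)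
    · exact .refl _
    · exact .rel _ _ h
    · exact .symm _ _ (.rel _ _ h)

instance : DecidableRel (sunGraph 7).Adj :=
  inferInstanceAs (DecidableRel (SimpleGraph.fromRel _).Adj)

/-- The bowtie of the 7-sun with center `c₁`. -/
def bowtie : Finset SunV := {.inl 0, .inl 1, .inl 2, .inr 0, .inr 1}

/-- The involution `c₀ ↔ p₀`, `c₂ ↔ p₁`: the EQUAL gadget identifies each bowtie vertex of one sun
with its image in the other sun. -/
def bowtieSwap : Equiv.Perm SunV :=
  Equiv.swap (.inl 0) (.inr 0) * Equiv.swap (.inl 2) (.inr 1)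

theorem mem_bowtie_and_eq_bowtieSwap_comm : ∀ x y,
    y ∈ bowtie ∧ x = bowtieSwap y ↔ x ∈ bowtie ∧ y = bowtieSwap x := by
  decide

theorem sunGraph_adj_bowtieSwap_iff : ∀ x ∈ bowtie, ∀ y ∈ bowtie,
    (sunGraph 7).Adj (bowtieSwap x) (bowtieSwap y) ↔ (sunGraph 7).Adj x y := by
  decide

theorem eq_inr_of_sunGraph_adj : ∀ i x, (sunGraph 7).Adj x (.inl i) →
    (sunGraph 7).Adj x (.inl (i + 1)) → x = .inr i := by
  decide

theorem eq_bowtieSwap_inr_of_sunGraph_adj : ∀ i x, .inl i ∈ bowtie → .inl (i + 1) ∈ bowtie →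
    (sunGraph 7).Adj x (bowtieSwap (.inl i)) → (sunGraph 7).Adj x (bowtieSwap (.inl (i + 1))) →
    .inr i ∈ bowtie ∧ x = bowtieSwap (.inr i) := by
  decide

theorem equalRel_iff {c d : Bool} {x y : SunV} :
    equalRel (c, x) (d, y) ↔ c = false ∧ d = true ∧ x ∈ bowtie ∧ y = bowtieSwap x := by
  constructor
  · rintro (⟨⟨⟩, ⟨⟩⟩ | ⟨⟨⟩, ⟨⟩⟩ | ⟨⟨⟩, ⟨⟩⟩ | ⟨⟨⟩, ⟨⟩⟩ | ⟨⟨⟩, ⟨⟩⟩) <;>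
      exact ⟨rfl, rfl, by decide, by decide⟩
  · rintro ⟨rfl, rfl, hx, rfl⟩
    revert x
    unfold equalRel
    decide

/-- The vertex of the gadget that comes from the vertex `x` of the copy `c` of the 7-sun. -/
def sunVertex (c : Bool) (x : SunV) : Quotient (Relation.EqvGen.setoid equalRel) :=
  Quotient.mk _ (c, x)

theorem sunVertex_eq_sunVertex_iff {c d : Bool} {x y : SunV} :
    sunVertex c x = sunVertex d y ↔
      (c, x) = (d, y) ∨ equalRel (c, x) (d, y) ∨ equalRel (d, y) (c, x) := by
  apply quotient_mk_eqvGen_eq_iff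
  all_goals
    rintro ⟨_, _⟩ ⟨_, _⟩ ⟨_, _⟩
    simp only [equalRel_iff]
    grind [bowtieSwap.injective]

theorem sunVertex_injective (c : Bool) : Function.Injective (sunVertex c) := by
  intro x y h
  cases c <;> simpa [sunVertex_eq_sunVertex_iff, equalRel_iff] using h

theorem sunVertex_eq_sunVertex_not {c : Bool} {x y : SunV} :
    sunVertex c x = sunVertex (!c) y ↔ x ∈ bowtie ∧ y = bowtieSwap x := by
  cases c <;> simp [sunVertex_eq_sunVertex_iff, equalRel_iff, mem_bowtie_and_eq_bowtieSwap_comm x y]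

theorem equalGadget_adj_iff {a b : Quotient (Relation.EqvGen.setoid equalRel)} :
    equalGadget.Adj a b ↔
      ∃ c x y, (sunGraph 7).Adj x y ∧ a = sunVertex c x ∧ b = sunVertex c y := by
  constructor
  · rintro ⟨-, ⟨⟨c, x⟩, ⟨_, y⟩, ⟨-, ⟨rfl, h⟩ | ⟨rfl, h⟩⟩, ha, hb⟩ |
      ⟨⟨c, y⟩, ⟨_, x⟩, ⟨-, ⟨rfl, h⟩ | ⟨rfl, h⟩⟩, hb, ha⟩⟩
    · exact ⟨_, x, y, h, ha, hb⟩
    · exact ⟨_, x, y, h.symm, ha, hb⟩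
    · exact ⟨_, x, y, h.symm, ha, hb⟩
    · exact ⟨_, x, y, h, ha, hb⟩
  · rintro ⟨c, x, y, h, rfl, rfl⟩
    refine ⟨(sunVertex_injective c).ne h.ne, .inl ⟨(c, x), (c, y), ?_, rfl, rfl⟩⟩
    exact ⟨fun hxy => h.ne (congrArg Prod.snd hxy), .inl ⟨rfl, h⟩⟩

theorem equalGadget_adj_sunVertex_iff {c : Bool} {x y : SunV} :
    equalGadget.Adj (sunVertex c x) (sunVertex c y) ↔ (sunGraph 7).Adj x y := by
  refine ⟨fun h => ?_, fun h => equalGadget_adj_iff.2 ⟨c, x, y, h, rfl, rfl⟩⟩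
  obtain ⟨d, x', y', h, hx, hy⟩ := equalGadget_adj_iff.1 h
  obtain rfl | rfl : d = c ∨ d = !c := Bool.eq_or_eq_not d c
  · rwa [sunVertex_injective d hx, sunVertex_injective d hy]
  · obtain ⟨hx_mem, rfl⟩ := sunVertex_eq_sunVertex_not.1 hx
    obtain ⟨hy_mem, rfl⟩ := sunVertex_eq_sunVertex_not.1 hy
    exact (sunGraph_adj_bowtieSwap_iff x hx_mem y hy_mem).1 h

/-- The copy `c` of the 7-sun as an induced subgraph of the gadget. -/
def sunEmbedding (c : Bool) : sunGraph 7 ↪g equalGadget :=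
  ⟨⟨sunVertex c, sunVertex_injective c⟩, equalGadget_adj_sunVertex_iff⟩

theorem sunEmbedding_inr_zero (c : Bool) :
    sunEmbedding c (.inr 0) = sunEmbedding (!c) (.inl 0) :=
  sunVertex_eq_sunVertex_not.2 (by decide)

theorem sunEmbedding_inr_one (c : Bool) :
    sunEmbedding c (.inr 1) = sunEmbedding (!c) (.inl 2) :=
  sunVertex_eq_sunVertex_not.2 (by decide)

theorem eq_sunEmbedding_inr_of_equalGadget_adj (c : Bool) (i : ZMod 7)
    {a : Quotient (Relation.EqvGen.setoid equalRel)}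
    (h : equalGadget.Adj a (sunEmbedding c (.inl i)))
    (h' : equalGadget.Adj a (sunEmbedding c (.inl (i + 1)))) : a = sunEmbedding c (.inr i) := by
  by_cases ha : ∃ x, sunVertex c x = a
  · obtain ⟨x, rfl⟩ := ha
    exact congrArg (sunVertex c) (eq_inr_of_sunGraph_adj i x (equalGadget_adj_sunVertex_iff.1 h)
      (equalGadget_adj_sunVertex_iff.1 h'))
  · have other_copy {y : SunV} (h : equalGadget.Adj a (sunVertex c y)) : y ∈ bowtie ∧
        ∃ x, a = sunVertex (!c) x ∧ (sunGraph 7).Adj x (bowtieSwap y) := by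
      obtain ⟨d, x, y', h, rfl, hy⟩ := equalGadget_adj_iff.1 h
      obtain rfl | rfl : d = c ∨ d = !c := Bool.eq_or_eq_not d c
      · exact absurd ⟨x, rfl⟩ ha
      · obtain ⟨hy_mem, rfl⟩ := sunVertex_eq_sunVertex_not.1 hy
        exact ⟨hy_mem, x, rfl, h⟩
    obtain ⟨hi, x, rfl, hx⟩ := other_copy h
    obtain ⟨hi', x', heq, hx'⟩ := other_copy h'
    obtain rfl := sunVertex_injective _ heq
    obtain ⟨hp, rfl⟩ := eq_bowtieSwap_inr_of_sunGraph_adj i x hi hi' hx hx'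
    exact (sunVertex_eq_sunVertex_not.2 ⟨hp, rfl⟩).symm

end Gadget

section Main

instance : Nontrivial (ZMod 7) :=
  ZMod.nontrivial_iff.2 (by decide)

variable {V : Type*} {G : SimpleGraph V} {f : TriLine G ≃g equalGadget} {c : Bool}

theorem exists_wheelEdge_or_exists_squaredCycleEdge (f : TriLine G ≃g equalGadget) (c : Bool) :
    (∃ φ, ∀ x, (f.symm (sunEmbedding c x) : Sym2 V) = (wheelEdge 7 x).map φ) ∨
      ∃ φ, ∀ x, (f.symm (sunEmbedding c x) : Sym2 V) = (squaredCycleEdge 7 x).map φ :=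
  (isSunPreimage_of_embedding f (sunEmbedding c) fun i _ h h' =>
    eq_sunEmbedding_inr_of_equalGadget_adj c i h h').wheelEdge_or_squaredCycleEdge le_rfl

theorem nonempty_iso_wheelGraph_seven {φ : Option (ZMod 7) → V}
    (h : ∀ x, (f.symm (sunEmbedding c x) : Sym2 V) = (wheelEdge 7 x).map φ) :
    Nonempty ((edgePre G f (equalSunVerts c)).coe ≃g wheelGraph 7) :=
  nonempty_edgePre_range_iso range_wheelEdge
    (fun _ _ => wheelGraph_adj_or_commonNeighbors_nonempty) (sunEmbedding c).injective h

theorem nonempty_iso_squaredCycleGraph_seven {φ : ZMod 7 → V}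
    (h : ∀ x, (f.symm (sunEmbedding c x) : Sym2 V) = (squaredCycleEdge 7 x).map φ) :
    Nonempty ((edgePre G f (equalSunVerts c)).coe ≃g squaredCycleGraph 7) :=
  nonempty_edgePre_range_iso (range_squaredCycleEdge (by decide))
    squaredCycleGraph_seven_adj_or_exists_adj (sunEmbedding c).injective h

theorem not_squaredCycleEdge_of_wheelEdge {φ : Option (ZMod 7) → V} {ψ : ZMod 7 → V}
    (hφ : ∀ x, (f.symm (sunEmbedding c x) : Sym2 V) = (wheelEdge 7 x).map φ) :
    ¬∀ x, (f.symm (sunEmbedding (!c) x) : Sym2 V) = (squaredCycleEdge 7 x).map ψ := by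
  intro hψ
  obtain ⟨F, rfl⟩ := exists_copy_coe_eq (range_squaredCycleEdge (by decide))
    squaredCycleGraph_seven_adj_or_exists_adj (sunEmbedding (!c)).injective hψ
  have h₀ : Sym2.map F s(0, 1) = s(φ (some 0), φ (some 1)) :=
    (hψ (.inl 0)).symm.trans (sunEmbedding_inr_zero c ▸ hφ (.inr 0))
  have h₂ : Sym2.map F s(2, 3) = s(φ (some 1), φ (some 2)) :=
    (hψ (.inl 2)).symm.trans (sunEmbedding_inr_one c ▸ hφ (.inr 1))
  obtain ⟨i, hi, hiφ⟩ := Sym2.mem_map.1 (h₀ ▸ Sym2.mem_mk_right (φ (some 0)) (φ (some 1)))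
  obtain ⟨j, hj, hjφ⟩ := Sym2.mem_map.1 (h₂ ▸ Sym2.mem_mk_left (φ (some 1)) (φ (some 2)))
  obtain rfl : i = j := F.injective (hiφ.trans hjφ.symm)
  exact (by decide : ∀ i : ZMod 7, i ∈ s(0, 1) → i ∉ s(2, 3)) i hi hj

end Main

theorem equalGadget_preimages_general {V : Type*} (G : SimpleGraph V)
    (f : TriLine G ≃g equalGadget) :
    (Nonempty ((edgePre G f (equalSunVerts false)).coe ≃g wheelGraph 7) ∧
      Nonempty ((edgePre G f (equalSunVerts true)).coe ≃g wheelGraph 7)) ∨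
    (Nonempty ((edgePre G f (equalSunVerts false)).coe ≃g squaredCycleGraph 7) ∧
      Nonempty ((edgePre G f (equalSunVerts true)).coe ≃g squaredCycleGraph 7)) := by
  rcases exists_wheelEdge_or_exists_squaredCycleEdge f false with ⟨φ, hφ⟩ | ⟨φ, hφ⟩ <;>
    rcases exists_wheelEdge_or_exists_squaredCycleEdge f true with ⟨ψ, hψ⟩ | ⟨ψ, hψ⟩
  · exact .inl ⟨nonempty_iso_wheelGraph_seven hφ, nonempty_iso_wheelGraph_seven hψ⟩
  · exact absurd hψ (not_squaredCycleEdge_of_wheelEdge hφ)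
  · exact absurd hφ (not_squaredCycleEdge_of_wheelEdge hψ)
  · exact .inr ⟨nonempty_iso_squaredCycleGraph_seven hφ, nonempty_iso_squaredCycleGraph_seven hψ⟩

/-- If two 7-suns `S`, `S'` are joined by an EQUAL gadget and the resulting graph has a
triangular line graph preimage `G`, then `T⁻¹(S)` and `T⁻¹(S')` are isomorphic: either
both are 7-wheels, or both are squared 7-cycles. -/
theorem equalGadget_preimages {V : Type} [Fintype V] (G : SimpleGraph V)
    (f : TriLine G ≃g equalGadget) :
    (Nonempty ((edgePre G f (equalSunVerts false)).coe ≃g wheelGraph 7) ∧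
      Nonempty ((edgePre G f (equalSunVerts true)).coe ≃g wheelGraph 7)) ∨
    (Nonempty ((edgePre G f (equalSunVerts false)).coe ≃g squaredCycleGraph 7) ∧
      Nonempty ((edgePre G f (equalSunVerts true)).coe ≃g squaredCycleGraph 7)) :=
  equalGadget_preimages_general G f
end
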